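/- arXiv:1704.04395 — 2 statements merged into one kernel-verified Lean document; each statement's English description precedes it below -/
import Mathlib

section
/- Let A = (a_n^k) and B = (b_n^k) be Köthe matrices, and let ℓ be a Banach sequence space with monotone norm. Let T : λ(A) → λ^ℓ(B) be a linear map such that T x = Σ_n x_n T e_n (with convergence in λ^ℓ(B)) for every x = (x_n) ∈ λ(A), where e_n denotes the n-th canonical unit sequence. Then T is continuous if and only if for every m ∈ ℕ there exists k ∈ ℕ such that sup_n ‖T e_n‖_m / a_n^k < ∞. -/
/-!
The unit sequences `eSeq n` satisfy `‖eSeq n‖_k = a n k`, so evaluating an operator bound at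
`(a n k)⁻¹ • eSeq n` gives the bound on `‖T (eSeq n)‖_m / a n k`. Conversely, if these quotients
are bounded by `C`, the triangle inequality bounds every partial sum of `∑ x n • T (eSeq n)` by
`C * ∑ |x n| * a n k = C * ‖x‖_k`, and the bound passes to the limit `T x`
(`lamLNorm_partial_sum_le` carries this estimate).
-/

open scoped ENNReal BigOperators

/-- The `n`-th canonical unit sequence in `ℝ^ℕ`. -/
def eSeq (n : ℕ) : ℕ → ℝ := fun m => if m = n then 1 else 0

/-- Unconditional (finite-partial-sums) convergence of the series `∑ n, f n` to `y`,
with respect to the norm `nn`. -/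
def HasSumIn (nn : (ℕ → ℝ) → ℝ) (f : ℕ → ℕ → ℝ) (y : ℕ → ℝ) : Prop :=
  ∀ ε : ℝ, 0 < ε → ∃ F : Finset ℕ, ∀ G : Finset ℕ, F ⊆ G → nn ((∑ n ∈ G, f n) - y) < ε

/-- A Banach sequence space with a monotone norm in which the canonical system `(eSeq n)`
is an unconditional basis. -/
structure MonoBanachSeqSpace where
  mem : (ℕ → ℝ) → Prop
  nrm : (ℕ → ℝ) → ℝ
  mem_zero : mem 0
  mem_add : ∀ {x y}, mem x → mem y → mem (x + y)
  mem_smul : ∀ (c : ℝ) {x}, mem x → mem (c • x)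
  nrm_nonneg : ∀ x, mem x → 0 ≤ nrm x
  nrm_eq_zero_iff : ∀ {x}, mem x → (nrm x = 0 ↔ x = 0)
  nrm_add_le : ∀ {x y}, mem x → mem y → nrm (x + y) ≤ nrm x + nrm y
  nrm_smul : ∀ (c : ℝ) {x}, mem x → nrm (c • x) = |c| * nrm x
  complete : ∀ u : ℕ → ℕ → ℝ, (∀ n, mem (u n)) →
    (∀ ε : ℝ, 0 < ε → ∃ M, ∀ p q, M ≤ p → M ≤ q → nrm (u p - u q) < ε) →
    ∃ x, mem x ∧ ∀ ε : ℝ, 0 < ε → ∃ M, ∀ p, M ≤ p → nrm (u p - x) < ε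
  mem_e : ∀ n, mem (eSeq n)
  nrm_e : ∀ n, nrm (eSeq n) = 1
  mem_mul : ∀ (β : ℕ → ℝ) {x}, mem x → (∀ n, |β n| ≤ 1) → mem fun n => β n * x n
  expand : ∀ {x : ℕ → ℝ} (β : ℕ → ℝ), mem x → (∀ n, |β n| ≤ 1) →
    HasSumIn nrm (fun n => (β n * x n) • eSeq n) (fun n => β n * x n)
  mono : ∀ {x y}, mem x → mem y → (∀ n, |x n| ≤ |y n|) → nrm x ≤ nrm y

/-- A Köthe matrix over a countable index set. -/
def IsKotheMatrix {ι : Type*} (a : ι → ℕ → ℝ) : Prop :=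
  ∀ n k, 0 < a n k ∧ a n k ≤ a n (k + 1)

/-- Membership in the Köthe space `λ(a)`. -/
def memLam {ι : Type*} (a : ι → ℕ → ℝ) (x : ι → ℝ) : Prop :=
  ∀ k, Summable fun n => |x n| * a n k

/-- The `k`-th seminorm of the Köthe space `λ(a)`. -/
noncomputable def lamNorm {ι : Type*} (a : ι → ℕ → ℝ) (k : ℕ) (x : ι → ℝ) : ℝ :=
  ∑' n, |x n| * a n k

/-- Membership in the `ℓ`-Köthe space `λ^ℓ(b)`. -/
def memLamL (l : MonoBanachSeqSpace) (b : ℕ → ℕ → ℝ) (x : ℕ → ℝ) : Prop :=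
  ∀ k, l.mem fun n => x n * b n k

/-- The `k`-th seminorm of the `ℓ`-Köthe space `λ^ℓ(b)`. -/
noncomputable def lamLNorm (l : MonoBanachSeqSpace) (b : ℕ → ℕ → ℝ) (k : ℕ) (x : ℕ → ℝ) : ℝ :=
  l.nrm fun n => x n * b n k

/-- The operator seminorm `‖T‖_{pY,pX} = sup {pY (T x) : x ∈ memX, pX x ≤ 1}`,
with values in `ℝ≥0∞`. -/
noncomputable def opSeminorm {X Y : Type*} (memX : X → Prop) (pX : X → ℝ) (pY : Y → ℝ)
    (T : X → Y) : ℝ≥0∞ :=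
  ⨆ x : {x : X // memX x ∧ pX x ≤ 1}, ENNReal.ofReal (pY (T x.1))

/-- The dual seminorm `‖u‖*_k = sup {|u x| : p k x ≤ 1}` of a linear functional,
with values in `ℝ≥0∞`. -/
noncomputable def dualNorm {E : Type*} [AddCommGroup E] [Module ℝ E]
    (p : ℕ → Seminorm ℝ E) (k : ℕ) (u : E →ₗ[ℝ] ℝ) : ℝ≥0∞ :=
  ⨆ x : {x : E // p k x ≤ 1}, ENNReal.ofReal |u x.1|

/-- `max_{1 ≤ k ≤ k₀} f k` for a real-valued `f`. -/
noncomputable def maxIcc (k₀ : ℕ) (h : 1 ≤ k₀) (f : ℕ → ℝ) : ℝ :=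
  (Finset.Icc 1 k₀).sup' (Finset.nonempty_Icc.mpr h) f

theorem memLam_eSeq (a : ℕ → ℕ → ℝ) (n : ℕ) : memLam a (eSeq n) := by
  intro k
  refine summable_of_ne_finset_zero (s := {n}) fun i hi => ?_
  have : i ≠ n := by simpa using hi
  simp [eSeq, this]

theorem memLam_smul (a : ℕ → ℕ → ℝ) (c : ℝ) {x : ℕ → ℝ} (hx : memLam a x) :
    memLam a (c • x) := by
  intro k
  simpa [abs_mul, mul_assoc] using (hx k).mul_left |c|

theorem lamNorm_smul_eSeq (a : ℕ → ℕ → ℝ) (k n : ℕ) (c : ℝ) :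
    lamNorm a k (c • eSeq n) = |c| * a n k := by
  unfold lamNorm
  rw [tsum_eq_single n]
  · simp [eSeq]
  · intro i hi
    simp [eSeq, hi]

theorem memLamL_add (l : MonoBanachSeqSpace) (b : ℕ → ℕ → ℝ) {x y : ℕ → ℝ}
    (hx : memLamL l b x) (hy : memLamL l b y) : memLamL l b (x + y) := by
  intro k
  have h : (fun n => (x + y) n * b n k) = (fun n => x n * b n k) + fun n => y n * b n k := by
    ext n; simp [add_mul]
  rw [h]
  exact l.mem_add (hx k) (hy k)

theorem memLamL_smul (l : MonoBanachSeqSpace) (b : ℕ → ℕ → ℝ) (c : ℝ) {x : ℕ → ℝ}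
    (hx : memLamL l b x) : memLamL l b (c • x) := by
  intro k
  have h : (fun n => (c • x) n * b n k) = c • fun n => x n * b n k := by
    ext n; simp [mul_assoc]
  rw [h]
  exact l.mem_smul c (hx k)

theorem memLamL_zero (l : MonoBanachSeqSpace) (b : ℕ → ℕ → ℝ) : memLamL l b 0 := by
  intro k
  have h : (fun n => (0 : ℕ → ℝ) n * b n k) = 0 := by
    ext n; simp
  rw [h]
  exact l.mem_zero

theorem lamLNorm_zero (l : MonoBanachSeqSpace) (b : ℕ → ℕ → ℝ) (k : ℕ) :
    lamLNorm l b k 0 = 0 := by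
  have h : (fun n => (0 : ℕ → ℝ) n * b n k) = 0 := by
    ext n; simp
  unfold lamLNorm
  rw [h]
  exact (l.nrm_eq_zero_iff l.mem_zero).2 rfl

theorem lamLNorm_add_le (l : MonoBanachSeqSpace) (b : ℕ → ℕ → ℝ) (k : ℕ) {x y : ℕ → ℝ}
    (hx : memLamL l b x) (hy : memLamL l b y) :
    lamLNorm l b k (x + y) ≤ lamLNorm l b k x + lamLNorm l b k y := by
  have h : (fun n => (x + y) n * b n k) = (fun n => x n * b n k) + fun n => y n * b n k := by
    ext n; simp [add_mul]
  unfold lamLNorm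
  rw [h]
  exact l.nrm_add_le (hx k) (hy k)

theorem lamLNorm_smul (l : MonoBanachSeqSpace) (b : ℕ → ℕ → ℝ) (k : ℕ) (c : ℝ) {x : ℕ → ℝ}
    (hx : memLamL l b x) : lamLNorm l b k (c • x) = |c| * lamLNorm l b k x := by
  have h : (fun n => (c • x) n * b n k) = c • fun n => x n * b n k := by
    ext n; simp [mul_assoc]
  unfold lamLNorm
  rw [h]
  exact l.nrm_smul c (hx k)

/-- Finite linear combinations of vectors `y n` with `‖y n‖_m ≤ C * w n` obey the weighted
`ℓ¹` bound with the same constant. -/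
theorem lamLNorm_partial_sum_le (l : MonoBanachSeqSpace) (b : ℕ → ℕ → ℝ) (m : ℕ)
    (y : ℕ → ℕ → ℝ) (hy : ∀ n, memLamL l b (y n)) (w : ℕ → ℝ) (C : ℝ)
    (hC : ∀ n, lamLNorm l b m (y n) ≤ C * w n) (x : ℕ → ℝ) (N : ℕ) :
    memLamL l b (∑ n ∈ Finset.range N, x n • y n) ∧
      lamLNorm l b m (∑ n ∈ Finset.range N, x n • y n) ≤
        C * ∑ n ∈ Finset.range N, |x n| * w n := by
  induction N with
  | zero => simpa [lamLNorm_zero] using memLamL_zero l b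
  | succ N ih =>
    rw [Finset.sum_range_succ, Finset.sum_range_succ]
    have hs := memLamL_smul l b (x N) (hy N)
    refine ⟨memLamL_add l b ih.1 hs, (lamLNorm_add_le l b m ih.1 hs).trans ?_⟩
    rw [lamLNorm_smul l b m (x N) (hy N)]
    have := mul_le_mul_of_nonneg_left (hC N) (abs_nonneg (x N))
    linarith [ih.2]

/-- Lemma 1. Let `A`, `B` be Köthe matrices and `ℓ` a Banach sequence space
with monotone norm. Let `T : λ(A) → λ^ℓ(B)` be linear with `T x = ∑ n, x n • T (eSeq n)`
(convergence in `λ^ℓ(B)`). Then `T` is continuous iff for every `m` there is `k` with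
`sup_n ‖T (eSeq n)‖_m / a_n^k < ∞`. -/
theorem continuous_iff_sup_on_basis
    (a b : ℕ → ℕ → ℝ) (ha : IsKotheMatrix a) (hb : IsKotheMatrix b)
    (l : MonoBanachSeqSpace)
    (T : (ℕ → ℝ) → (ℕ → ℝ))
    (hmapT : ∀ x, memLam a x → memLamL l b (T x))
    (haddT : ∀ x y, memLam a x → memLam a y → T (x + y) = T x + T y)
    (hsmulT : ∀ (c : ℝ) (x), memLam a x → T (c • x) = c • T x)
    (hexpT : ∀ x, memLam a x → ∀ k, ∀ ε : ℝ, 0 < ε → ∃ M : ℕ, ∀ m, M ≤ m →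
      lamLNorm l b k (T x - ∑ n ∈ Finset.range m, x n • T (eSeq n)) < ε) :
    (∀ m, ∃ k, opSeminorm (memLam a) (lamNorm a k) (lamLNorm l b m) T < ⊤) ↔
      (∀ m, ∃ k, ∃ C : ℝ, ∀ n, lamLNorm l b m (T (eSeq n)) / a n k ≤ C) := by
  constructor
  · intro h m
    obtain ⟨k, hk⟩ := h m
    refine ⟨k, (opSeminorm (memLam a) (lamNorm a k) (lamLNorm l b m) T).toReal, fun n => ?_⟩
    have hpos : 0 < a n k := (ha n k).1
    have hmem := memLam_smul a (a n k)⁻¹ (memLam_eSeq a n)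
    have hle : lamNorm a k ((a n k)⁻¹ • eSeq n) ≤ 1 := by
      rw [lamNorm_smul_eSeq, abs_of_pos (inv_pos.2 hpos), inv_mul_cancel₀ hpos.ne']
    have h1 : ENNReal.ofReal (lamLNorm l b m (T ((a n k)⁻¹ • eSeq n))) ≤
        opSeminorm (memLam a) (lamNorm a k) (lamLNorm l b m) T :=
      le_iSup (fun x : {x : ℕ → ℝ // memLam a x ∧ lamNorm a k x ≤ 1} =>
        ENNReal.ofReal (lamLNorm l b m (T x.1))) ⟨_, hmem, hle⟩
    have h2 := (ENNReal.ofReal_le_iff_le_toReal hk.ne).1 h1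
    rwa [hsmulT _ _ (memLam_eSeq a n), lamLNorm_smul l b m _ (hmapT _ (memLam_eSeq a n)),
      abs_of_pos (inv_pos.2 hpos), inv_mul_eq_div] at h2
  · intro h m
    obtain ⟨k, C, hC⟩ := h m
    refine ⟨k, lt_of_le_of_lt (iSup_le ?_) (ENNReal.ofReal_lt_top (r := C))⟩
    rintro ⟨x, hx, hx1⟩
    refine ENNReal.ofReal_le_ofReal (le_of_forall_pos_le_add fun ε hε => ?_)
    have hTe n : memLamL l b (T (eSeq n)) := hmapT _ (memLam_eSeq a n)
    have hC0 : 0 ≤ C :=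
      (div_nonneg (l.nrm_nonneg _ (hTe 0 m)) (ha 0 k).1.le).trans (hC 0)
    obtain ⟨N, hN⟩ := hexpT x hx m ε hε
    obtain ⟨hSmem, hSle⟩ := lamLNorm_partial_sum_le l b m (fun n => T (eSeq n)) hTe
      (fun n => a n k) C (fun n => (div_le_iff₀ (ha n k).1).1 (hC n)) x N
    set S := ∑ n ∈ Finset.range N, x n • T (eSeq n) with hS
    have hsum : ∑ n ∈ Finset.range N, |x n| * a n k ≤ 1 :=
      ((hx k).sum_le_tsum _ fun n _ => mul_nonneg (abs_nonneg _) (ha n k).1.le).trans hx1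
    have hdiff : memLamL l b (T x - S) := by
      have := memLamL_add l b (hmapT x hx) (memLamL_smul l b (-1) hSmem)
      rwa [neg_one_smul, ← sub_eq_add_neg] at this
    have htri := lamLNorm_add_le l b m hdiff hSmem
    rw [sub_add_cancel] at htri
    have hCs := mul_le_mul_of_nonneg_left hsum hC0
    have := hN N le_rfl
    linarith
end

section
/- Let E be a Fréchet space whose topology is generated by an increasing sequence of seminorms (‖·‖_k), let A = (a_n^k) be a Köthe matrix, and let ℓ be a Banach sequence space with monotone norm. Then every continuous linear operator from E to λ^ℓ(A) is bounded (i.e., (E, λ^ℓ(A)) ∈ 𝓑) if and only if for every function N : ℕ → ℕ there exists N₀ ∈ ℕ such that for each r ∈ ℕ there exist k₀ ∈ ℕ and C > 0 with a_v^r · ‖u‖*_{N₀} ≤ C · max_{1 ≤ k ≤ k₀} (a_v^k · ‖u‖*_{N(k)}) for all v ∈ ℕ and all continuous linear functionals u ∈ E′. -/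
/-!
The equivalence of `(E, λ^ℓ(a)) ∈ 𝓑` with the dual inequality (`KotheB.DualIneq`).

*Boundedness implies the inequality* (`KotheB.necessity`). If the inequality fails for `N`, there
are functionals `u_m` and indices `v m`, normalised so that `u_m ⊗ e_{v m}` is bounded by
`p (N k)` at the levels `1 ≤ k ≤ m + 1`, whose norms from `p i` to a level `r i` exceed `4 ^ m`;
every `i` is treated infinitely often. All subseries of `∑ 2⁻ᵐ u_m ⊗ e_{v m}` are continuous
operators, hence bounded. Baire's theorem in the Cantor space of subseries (`baire_bound`) then
gives one `i` with `‖u_m ⊗ e_{v m}‖ ≤ D * 2 ^ m` for large `m`, a contradiction.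

*The inequality implies boundedness* (`KotheB.sufficiency`). Fix a continuous `T`. Since finitely
supported elements are dense, it is enough to bound the finite pieces of `T` uniformly (`Bd`).
Composing a piece with a norming functional turns the dual inequality into an implication between
bounds on the piece (`star`), in which the weights belong to an arbitrary index `w`. A diagonal
argument (`bstar`) allows the far indices to be chosen after the target index; its two special
cases are `dir`, fed by the continuity of `T`, and `step`, which trades a bound at one index for a
bound at a larger one with a factor depending on `w`.

From `dir` one obtains an index `i₀` that bounds `T` with a linear loss wherever the ratio of two
levels is bounded (`de`). Three applications of `step` give `i₁ ≤ i₂ ≤ i₃` (`setup`): the first two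
absorb the loss on sets where the ratio of level `r` to level `i₃` is essentially dominated by its
value at one `w` and the higher levels of `w` are dominated by those of the set; the third yields a
gain on sets whose levels are well separated from those of some `w`. The combinatorial lemma
`comb` cuts any finite set into blocks `t = 0, 1, …`, each a union of a fixed number of sets of the
first kind, with a separation from some `w` proportional to `t`. The bounds at index `i₃` on the
blocks therefore decay geometrically in `t`, and their sum bounds `T` (`finite_bound`). The index
`i₃` does not depend on `r`.
-/

open scoped ENNReal BigOperators

namespace KotheB

/-! ### Finite restrictions and norming functionals -/

/-- The restriction of a sequence to a finite set of coordinates. -/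
def res (Y : Finset ℕ) (z : ℕ → ℝ) : ℕ → ℝ := fun n => if n ∈ Y then z n else 0

lemma mem_res (l : MonoBanachSeqSpace) (Y : Finset ℕ) (z : ℕ → ℝ) : l.mem (res Y z) := by
  classical
  induction Y using Finset.induction_on with
  | empty =>
    convert l.mem_zero using 1
    ext n; simp [res]
  | insert m Y hm ih =>
    convert l.mem_add (l.mem_smul (z m) (l.mem_e m)) ih using 1
    ext n
    by_cases h : n = m
    · subst h; simp [res, eSeq, hm]
    · simp [res, eSeq, h]

lemma abs_coord_le (l : MonoBanachSeqSpace) {x : ℕ → ℝ} (hx : l.mem x) (n : ℕ) :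
    |x n| ≤ l.nrm x := by
  have h := l.mono (l.mem_smul (x n) (l.mem_e n)) hx (fun m => by
    by_cases h : m = n
    · subst h; simp [eSeq]
    · simp [eSeq, h])
  rwa [l.nrm_smul _ (l.mem_e n), l.nrm_e, mul_one] at h

lemma res_add (Y : Finset ℕ) (z z' : ℕ → ℝ) : res Y (z + z') = res Y z + res Y z' := by
  ext n; by_cases h : n ∈ Y <;> simp [res, h]

lemma res_smul (Y : Finset ℕ) (c : ℝ) (z : ℕ → ℝ) : res Y (c • z) = c • res Y z := by
  ext n; by_cases h : n ∈ Y <;> simp [res, h]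

/-- A norming functional for the restriction of `z` to a finite set of coordinates. -/
lemma exists_norming (l : MonoBanachSeqSpace) (Y : Finset ℕ) (z : ℕ → ℝ) :
    ∃ g : (ℕ → ℝ) →ₗ[ℝ] ℝ, g z = l.nrm (res Y z) ∧ ∀ z', |g z'| ≤ l.nrm (res Y z') := by
  by_cases hz : z = 0
  · refine ⟨0, ?_, fun z' => ?_⟩
    · have : res Y z = 0 := by subst hz; ext n; simp [res]
      rw [this, (l.nrm_eq_zero_iff l.mem_zero).2 rfl]; rfl
    · simpa using l.nrm_nonneg _ (mem_res l Y z')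
  have hneg : ∀ z' : ℕ → ℝ, l.nrm (res Y (-z')) = l.nrm (res Y z') := fun z' => by
    rw [← neg_one_smul ℝ z', res_smul, l.nrm_smul _ (mem_res l Y z')]; simp
  obtain ⟨g, hg1, hg2⟩ := exists_extension_of_le_sublinear
    (LinearPMap.mkSpanSingleton z (l.nrm (res Y z)) hz) (fun z' => l.nrm (res Y z'))
    (fun c hc z' => by
      simp only [res_smul]; rw [l.nrm_smul _ (mem_res l Y z'), abs_of_pos hc])
    (fun z1 z2 => by
      simp only [res_add]; exact l.nrm_add_le (mem_res l Y z1) (mem_res l Y z2))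
    (by
      rintro ⟨x, hx⟩
      obtain ⟨c, rfl⟩ := Submodule.mem_span_singleton.1 hx
      rw [LinearPMap.mkSpanSingleton'_apply]
      simp only [res_smul, smul_eq_mul]
      rw [l.nrm_smul _ (mem_res l Y z)]
      exact mul_le_mul_of_nonneg_right (le_abs_self c) (l.nrm_nonneg _ (mem_res l Y z)))
  refine ⟨g, ?_, fun z' => abs_le.2 ⟨?_, hg2 z'⟩⟩
  · have h := hg1 ⟨z, Submodule.mem_span_singleton_self z⟩
    have h2 := LinearPMap.mkSpanSingleton_apply (σ := RingHom.id ℝ) ℝ ℝ hz (l.nrm (res Y z))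
    rw [← h2, ← h]
  · have := hg2 (-z')
    rw [map_neg] at this
    simp only [hneg] at this
    linarith

/-! ### Dual seminorms -/

section Dual
variable {E : Type*} [AddCommGroup E] [Module ℝ E]

lemma dualNorm_le (p : ℕ → Seminorm ℝ E) (k : ℕ) (u : E →ₗ[ℝ] ℝ) {D : ℝ} (hD : 0 ≤ D)
    (h : ∀ x, |u x| ≤ D * p k x) : dualNorm p k u ≤ ENNReal.ofReal D := by
  refine iSup_le fun x => ENNReal.ofReal_le_ofReal ((h x.1).trans ?_)
  simpa using mul_le_mul_of_nonneg_left x.2 hD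

/-- A homogeneous function bounded by `D` on the unit ball of a seminorm `q` is at most `D * q`;
on the kernel of `q` it vanishes. -/
lemma le_mul_of_unit_ball (q : Seminorm ℝ E) (f : E → ℝ) (hf : ∀ (c : ℝ) x, f (c • x) = |c| * f x)
    {D : ℝ} (h : ∀ x, q x ≤ 1 → f x ≤ D) (x : E) : f x ≤ D * q x := by
  rcases (apply_nonneg q x).lt_or_eq with hx | hx
  · have h1 := h ((q x)⁻¹ • x) (by
      rw [map_smul_eq_mul, Real.norm_eq_abs, abs_of_pos (inv_pos.2 hx), inv_mul_cancel₀ hx.ne'])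
    rw [hf, abs_of_pos (inv_pos.2 hx)] at h1
    rw [inv_mul_le_iff₀ hx] at h1
    linarith
  · rw [← hx, mul_zero]
    by_contra hpos
    push Not at hpos
    have hD : 0 ≤ |D| + 1 := by positivity
    have h1 := h (((|D| + 1) / f x) • x) (by rw [map_smul_eq_mul, ← hx]; simp)
    rw [hf, abs_of_nonneg (by positivity), div_mul_cancel₀ _ hpos.ne'] at h1
    linarith [le_abs_self D]

lemma le_of_dualNorm_le (p : ℕ → Seminorm ℝ E) (k : ℕ) (u : E →ₗ[ℝ] ℝ) {D : ℝ} (hD : 0 ≤ D)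
    (h : dualNorm p k u ≤ ENNReal.ofReal D) (x : E) : |u x| ≤ D * p k x := by
  refine le_mul_of_unit_ball (p k) (fun x => |u x|) (fun c x => by simp [abs_mul]) (fun x hx => ?_) x
  have := (le_iSup (fun x : {x : E // p k x ≤ 1} => ENNReal.ofReal |u x.1|) ⟨x, hx⟩).trans h
  exact (ENNReal.ofReal_le_ofReal_iff hD).1 this

lemma monop (p : ℕ → Seminorm ℝ E) (hp : ∀ k x, p k x ≤ p (k + 1) x) {i j : ℕ} (h : i ≤ j) (x : E) :
    p i x ≤ p j x := monotone_nat_of_le_succ (f := fun k => p k x) (fun k => hp k x) h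

end Dual

lemma amono {a : ℕ → ℕ → ℝ} (ha : IsKotheMatrix a) (v : ℕ) {i j : ℕ} (h : i ≤ j) : a v i ≤ a v j :=
  monotone_nat_of_le_succ (f := fun k => a v k) (fun k => (ha v k).2) h

lemma apos {a : ℕ → ℕ → ℝ} (ha : IsKotheMatrix a) (v k : ℕ) : 0 < a v k := (ha v k).1

/-! ### Bounds on finite pieces of an operator -/

section Bounds
variable {E : Type*} [AddCommGroup E] [Module ℝ E]

/-- `Bd p a l T r c Y D`: the part of the operator `T` with coordinates in the finite set `Y`
has norm at most `D` from the `c`-th seminorm of `E` to the `r`-th seminorm of `λ^ℓ(a)`. -/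
def Bd (p : ℕ → Seminorm ℝ E) (a : ℕ → ℕ → ℝ) (l : MonoBanachSeqSpace) (T : E →ₗ[ℝ] (ℕ → ℝ))
    (r c : ℕ) (Y : Finset ℕ) (D : ℝ) : Prop :=
  ∀ x, l.nrm (res Y fun n => T x n * a n r) ≤ D * p c x

variable {p : ℕ → Seminorm ℝ E} {a : ℕ → ℕ → ℝ} {l : MonoBanachSeqSpace} {T : E →ₗ[ℝ] (ℕ → ℝ)}

lemma Bd.index (hp : ∀ k x, p k x ≤ p (k + 1) x) {r c c' : ℕ} {Y : Finset ℕ} {D : ℝ}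
    (h : Bd p a l T r c Y D) (hD : 0 ≤ D) (hc : c ≤ c') : Bd p a l T r c' Y D := fun x =>
  (h x).trans (mul_le_mul_of_nonneg_left (monop p hp hc x) hD)

lemma Bd.mono {r c : ℕ} {Y : Finset ℕ} {D D' : ℝ}
    (h : Bd p a l T r c Y D) (hD : D ≤ D') : Bd p a l T r c Y D' := fun x =>
  (h x).trans (mul_le_mul_of_nonneg_right hD (apply_nonneg _ x))

lemma Bd.subset {r c : ℕ} {Y Y' : Finset ℕ} {D : ℝ}
    (h : Bd p a l T r c Y D) (hY : Y' ⊆ Y) : Bd p a l T r c Y' D := fun x => by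
  refine le_trans (l.mono (mem_res l _ _) (mem_res l _ _) fun n => ?_) (h x)
  by_cases hn : n ∈ Y'
  · simp [res, hn, hY hn]
  · simp [res, hn]

/-- Changing the reference level from `r'` to `r`. -/
lemma Bd.ref (ha : IsKotheMatrix a) {r r' c : ℕ} {Y : Finset ℕ} {D ρ : ℝ} (h : Bd p a l T r' c Y D)
    (hρ : 0 ≤ ρ) (hY : ∀ v ∈ Y, a v r ≤ ρ * a v r') : Bd p a l T r c Y (ρ * D) := fun x => by
  have h1 := l.mono (x := res Y fun n => T x n * a n r)
    (y := ρ • res Y fun n => T x n * a n r') (mem_res l _ _)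
    (l.mem_smul _ (mem_res l _ _)) (fun n => by
      by_cases hn : n ∈ Y
      · simp only [res, hn, if_true, Pi.smul_apply, smul_eq_mul, abs_mul, abs_of_nonneg hρ,
          abs_of_pos (apos ha n _)]
        calc |T x n| * a n r ≤ |T x n| * (ρ * a n r') :=
              mul_le_mul_of_nonneg_left (hY n hn) (abs_nonneg _)
          _ = _ := by ring
      · simp [res, hn])
  rw [l.nrm_smul _ (mem_res l _ _), abs_of_nonneg hρ] at h1
  calc _ ≤ _ := h1
    _ ≤ ρ * (D * p c x) := mul_le_mul_of_nonneg_left (h x) hρ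
    _ = _ := by ring

lemma Bd.empty {r c : ℕ} : Bd p a l T r c ∅ 0 := fun x => by
  have : (res ∅ fun n => T x n * a n r) = 0 := by ext n; simp [res]
  rw [this, (l.nrm_eq_zero_iff l.mem_zero).2 rfl]; simp

lemma Bd.union {r c : ℕ} {Y Y' : Finset ℕ} {D D' : ℝ}
    (h : Bd p a l T r c Y D) (h' : Bd p a l T r c Y' D') :
    Bd p a l T r c (Y ∪ Y') (D + D') := fun x => by
  have e : (res (Y ∪ Y') fun n => T x n * a n r) =
      res Y (fun n => T x n * a n r) + res (Y' \ Y) (fun n => T x n * a n r) := by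
    ext n
    by_cases h1 : n ∈ Y <;> by_cases h2 : n ∈ Y' <;> simp [res, h1, h2]
  rw [e, add_mul]
  exact (l.nrm_add_le (mem_res l _ _) (mem_res l _ _)).trans
    (add_le_add (h x) (h'.subset Finset.sdiff_subset x))

lemma Bd.biUnion {ι : Type*} {r c : ℕ} (I : Finset ι) (Y : ι → Finset ℕ) (D : ι → ℝ)
    (h : ∀ i ∈ I, Bd p a l T r c (Y i) (D i)) :
    Bd p a l T r c (I.biUnion Y) (∑ i ∈ I, D i) := by
  classical
  induction I using Finset.induction_on with
  | empty => simpa using Bd.empty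
  | insert i I hi ih =>
    rw [Finset.biUnion_insert, Finset.sum_insert hi]
    exact (h i (Finset.mem_insert_self _ _)).union
      (ih fun j hj => h j (Finset.mem_insert_of_mem hj))

end Bounds

/-! ### Consequences of the dual inequality -/

section Estimates
variable {E : Type*} [AddCommGroup E] [Module ℝ E]

/-- The dual inequality characterising `(E, λ^ℓ(a)) ∈ 𝓑`. -/
def DualIneq (p : ℕ → Seminorm ℝ E) (a : ℕ → ℕ → ℝ) : Prop :=
  ∀ N : ℕ → ℕ, ∃ N₀ : ℕ, ∀ r : ℕ, ∃ k₀ : ℕ, 1 ≤ k₀ ∧ ∃ C : ℝ, 0 < C ∧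
    ∀ (v : ℕ) (u : E →ₗ[ℝ] ℝ), (∃ k, ∃ C' : ℝ, ∀ x, |u x| ≤ C' * p k x) →
      ENNReal.ofReal (a v r) * dualNorm p N₀ u ≤
        ENNReal.ofReal C *
          (Finset.Icc 1 k₀).sup (fun k => ENNReal.ofReal (a v k) * dualNorm p (N k) u)

variable {p : ℕ → Seminorm ℝ E} {a : ℕ → ℕ → ℝ} {l : MonoBanachSeqSpace} {T : E →ₗ[ℝ] (ℕ → ℝ)}

/-- The dual inequality transferred to the finite pieces of `T`, by composing the piece with a
norming functional. The index `w` of the weights is independent of the set `Y`. -/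
lemma star (ha : IsKotheMatrix a) (H : DualIneq p a) (N : ℕ → ℕ) :
    ∃ N₀ : ℕ, ∀ r : ℕ, ∃ k₀ : ℕ, 1 ≤ k₀ ∧ ∃ C : ℝ, 0 < C ∧ ∀ (w : ℕ) (Y : Finset ℕ) (R : ℝ),
      0 ≤ R →
      (∀ k, 1 ≤ k → k ≤ k₀ → ∃ D, 0 ≤ D ∧ Bd p a l T r (N k) Y D ∧ a w k * D ≤ R * a w r) →
      Bd p a l T r N₀ Y (C * R) := by
  obtain ⟨N₀, h⟩ := H N
  refine ⟨N₀, fun r => ?_⟩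
  obtain ⟨k₀, hk₀, C, hC, h⟩ := h r
  refine ⟨k₀, hk₀, C, hC, fun w Y R hR hyp x => ?_⟩
  obtain ⟨g, hg1, hg2⟩ := exists_norming l Y (fun n => T x n * a n r)
  let u : E →ₗ[ℝ] ℝ := g ∘ₗ (LinearMap.pi fun n => (a n r) • (LinearMap.proj n ∘ₗ T))
  have hu : ∀ x', u x' = g (fun n => T x' n * a n r) := fun x' => by
    simp only [u, LinearMap.comp_apply]
    congr 1
    ext n; simp [mul_comm]
  have hub : ∀ {k D}, Bd p a l T r k Y D → ∀ x', |u x'| ≤ D * p k x' := fun hB x' => by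
    rw [hu]; exact (hg2 _).trans (hB x')
  have haw := apos ha w r
  obtain ⟨D1, -, hB1, -⟩ := hyp 1 le_rfl hk₀
  have key := h w u ⟨N 1, D1, hub hB1⟩
  have hsup : (Finset.Icc 1 k₀).sup (fun k => ENNReal.ofReal (a w k) * dualNorm p (N k) u) ≤
      ENNReal.ofReal (R * a w r) := by
    refine Finset.sup_le fun k hk => ?_
    rw [Finset.mem_Icc] at hk
    obtain ⟨D, hD, hB, hle⟩ := hyp k hk.1 hk.2
    calc _ ≤ ENNReal.ofReal (a w k) * ENNReal.ofReal D := by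
          gcongr; exact dualNorm_le p _ u hD (hub hB)
      _ = ENNReal.ofReal (a w k * D) := (ENNReal.ofReal_mul (apos ha w k).le).symm
      _ ≤ _ := ENNReal.ofReal_le_ofReal hle
  have key2 : ENNReal.ofReal (a w r) * dualNorm p N₀ u ≤
      ENNReal.ofReal (a w r) * ENNReal.ofReal (C * R) := by
    calc _ ≤ _ := key
      _ ≤ ENNReal.ofReal C * ENNReal.ofReal (R * a w r) := by gcongr
      _ = _ := by
        rw [← ENNReal.ofReal_mul hC.le, ← ENNReal.ofReal_mul haw.le]; congr 1; ring
  have key3 : dualNorm p N₀ u ≤ ENNReal.ofReal (C * R) :=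
    (ENNReal.mul_le_mul_iff_right (by simpa using haw) ENNReal.ofReal_ne_top).1 key2
  have h4 := le_of_dualNorm_le p N₀ u (by positivity) key3 x
  rw [hu, hg1] at h4
  exact (le_abs_self _).trans h4

/-- A diagonal form of `star`: the far indices `g k`, `k > i`, may be prescribed after the target
index `i` has been chosen. -/
lemma bstar (hp : ∀ k x, p k x ≤ p (k + 1) x) (ha : IsKotheMatrix a) (H : DualIneq p a)
    (M0 : ℕ → ℕ) (c : ℕ) :
    ∃ i, c ≤ i ∧ ∀ (r : ℕ) (g : ℕ → ℕ), ∃ κ : ℕ, ∃ C : ℝ, 0 < C ∧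
      ∀ (w : ℕ) (Y : Finset ℕ) (R : ℝ), 0 ≤ R →
      (∀ k, k ≤ i → ∃ D, 0 ≤ D ∧ Bd p a l T r (M0 k) Y D ∧ a w k * D ≤ R * a w r) →
      (∀ k, k ≤ κ → ∃ D, 0 ≤ D ∧ Bd p a l T r (g k) Y D ∧ a w k * D ≤ R * a w r) →
      Bd p a l T r i Y (C * R) := by
  by_contra hcon
  have hneg : ∀ j, ∃ (r : ℕ) (g : ℕ → ℕ), ∀ (κ : ℕ) (C : ℝ), 0 < C →
      ∃ (w : ℕ) (Y : Finset ℕ) (R : ℝ), 0 ≤ R ∧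
      (∀ k, k ≤ max j c → ∃ D, 0 ≤ D ∧ Bd p a l T r (M0 k) Y D ∧ a w k * D ≤ R * a w r) ∧
      (∀ k, k ≤ κ → ∃ D, 0 ≤ D ∧ Bd p a l T r (g k) Y D ∧ a w k * D ≤ R * a w r) ∧
      ¬ Bd p a l T r (max j c) Y (C * R) := by
    intro j
    by_contra hj
    apply hcon
    refine ⟨max j c, le_max_right _ _, fun r g => ?_⟩
    by_contra h2
    apply hj
    refine ⟨r, g, fun κ C hC => ?_⟩
    by_contra h3
    apply h2
    refine ⟨κ, C, hC, fun w Y R hR h4 h5 => ?_⟩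
    by_contra h6
    exact h3 ⟨w, Y, R, hR, h4, h5, h6⟩
  choose r g hrg using hneg
  obtain ⟨N₀, hN⟩ := star (l := l) (T := T) ha H
    (fun k => max (M0 k) ((Finset.range k).sup fun j => g j k))
  obtain ⟨k₀, hk₀, C, hC, hN⟩ := hN (r (max N₀ c))
  obtain ⟨w, Y, R, hR, h1, h2, h3⟩ := hrg (max N₀ c) k₀ C hC
  rw [max_eq_left (le_max_right N₀ c)] at h1 h3
  refine h3 ((hN w Y R hR fun k _ hk => ?_).index hp (by positivity) (le_max_left _ _))
  by_cases hki : k ≤ max N₀ c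
  · obtain ⟨D, hD, hB, hle⟩ := h1 k hki
    exact ⟨D, hD, hB.index hp hD (le_max_left _ _), hle⟩
  · obtain ⟨D, hD, hB, hle⟩ := h2 k hk
    refine ⟨D, hD, hB.index hp hD (le_trans ?_ (le_max_right _ _)), hle⟩
    exact Finset.le_sup (f := fun j => g j k) (Finset.mem_range.2 (not_le.1 hki))

/-- The weights normalised at level `r`. -/
noncomputable def rat (a : ℕ → ℕ → ℝ) (r v k : ℕ) : ℝ := a v k / a v r

lemma rat_pos (ha : IsKotheMatrix a) (r v k : ℕ) : 0 < rat a r v k :=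
  div_pos (apos ha v k) (apos ha v r)

lemma rat_self (ha : IsKotheMatrix a) (r v : ℕ) : rat a r v r = 1 := div_self (apos ha v r).ne'

lemma rat_mono (ha : IsKotheMatrix a) (r v : ℕ) {i j : ℕ} (h : i ≤ j) :
    rat a r v i ≤ rat a r v j :=
  div_le_div_of_nonneg_right (amono ha v h) (apos ha v r).le

/-- Continuity data of an operator into `λ^ℓ(a)`: indices `NT k` and constants `Ck k` with
`‖T x‖_k ≤ Ck k * p (NT k) x`. -/
structure Cont (p : ℕ → Seminorm ℝ E) (a : ℕ → ℕ → ℝ) (l : MonoBanachSeqSpace)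
    (T : E →ₗ[ℝ] (ℕ → ℝ)) (NT : ℕ → ℕ) (Ck : ℕ → ℝ) : Prop where
  mem : ∀ x, memLamL l a (T x)
  nonneg : ∀ k, 0 ≤ Ck k
  le : ∀ k x, l.nrm (fun n => T x n * a n k) ≤ Ck k * p (NT k) x

variable {NT : ℕ → ℕ} {Ck : ℕ → ℝ}

lemma Cont.bd (hT : Cont p a l T NT Ck) (k : ℕ) (Y : Finset ℕ) : Bd p a l T k (NT k) Y (Ck k) :=
  fun x => (l.mono (mem_res l _ _) (hT.mem x k) fun n => by
    by_cases hn : n ∈ Y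
    · simp [res, hn]
    · simp only [res, hn, if_false, abs_zero, abs_nonneg]).trans (hT.le k x)

lemma Cont.direct (ha : IsKotheMatrix a) (hT : Cont p a l T NT Ck) {r w k q : ℕ} {Y : Finset ℕ}
    {R : ℝ} (hR : 0 ≤ R) (h : ∀ v ∈ Y, rat a r w k ≤ R * rat a r v q) :
    ∃ D, 0 ≤ D ∧ Bd p a l T r (NT q) Y D ∧ a w k * D ≤ (Ck q * R) * a w r := by
  have hw := rat_pos ha r w k
  have hq := hT.nonneg q
  refine ⟨R / rat a r w k * Ck q, by positivity,
    (hT.bd q Y).ref ha (by positivity) fun v hv => ?_, ?_⟩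
  · have h1 := h v hv
    have hvr := apos ha v r
    have e : R * rat a r v q = R * a v q / a v r := by simp [rat, mul_div_assoc]
    rw [e, le_div_iff₀ hvr] at h1
    rw [div_mul_eq_mul_div, le_div_iff₀ hw]
    linarith
  · have h1 := apos ha w k
    have h2 := apos ha w r
    apply le_of_eq
    unfold rat
    field_simp

/-- The case of `bstar` in which all bounds come from the continuity of `T`. -/
lemma dir (hp : ∀ k x, p k x ≤ p (k + 1) x) (ha : IsKotheMatrix a) (H : DualIneq p a)
    (hT : Cont p a l T NT Ck) (h0 : ℕ → ℕ) (c : ℕ) :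
    ∃ i, c ≤ i ∧ ∀ (r : ℕ) (h : ℕ → ℕ), ∃ κ : ℕ, ∃ C : ℝ, 0 < C ∧
      ∀ (w : ℕ) (Y : Finset ℕ) (R : ℝ), 0 ≤ R →
      (∀ k, k ≤ i → ∀ v ∈ Y, rat a r w k ≤ R * rat a r v (h0 k)) →
      (∀ k, k ≤ κ → ∀ v ∈ Y, rat a r w k ≤ R * rat a r v (h k)) →
      Bd p a l T r i Y (C * R) := by
  obtain ⟨i, hi, hb⟩ := bstar (l := l) (T := T) hp ha H (fun k => NT (h0 k)) c
  refine ⟨i, hi, fun r h => ?_⟩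
  obtain ⟨κ, C, hC, hb⟩ := hb r (fun k => NT (h k))
  have n1 : ∀ k, 0 ≤ Ck (h0 k) := fun k => hT.nonneg _
  have n2 : ∀ k, 0 ≤ Ck (h k) := fun k => hT.nonneg _
  set s1 := ∑ k ∈ Finset.range (i + 1), Ck (h0 k) with hs1
  set s2 := ∑ k ∈ Finset.range (κ + 1), Ck (h k) with hs2
  have hs1' : 0 ≤ s1 := Finset.sum_nonneg fun k _ => n1 k
  have hs2' : 0 ≤ s2 := Finset.sum_nonneg fun k _ => n2 k
  refine ⟨κ, C * (1 + s1 + s2), by positivity, fun w Y R hR c1 c2 => ?_⟩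
  have hw := apos ha w r
  rw [mul_assoc]
  refine hb w Y _ (by positivity) (fun k hk => ?_) (fun k hk => ?_)
  · obtain ⟨D, hD, hB, hle⟩ := hT.direct ha hR (c1 k hk)
    refine ⟨D, hD, hB, hle.trans ?_⟩
    have : Ck (h0 k) ≤ s1 := Finset.single_le_sum (f := fun k => Ck (h0 k)) (fun k _ => n1 k)
      (Finset.mem_range.2 (Nat.lt_succ_of_le hk))
    gcongr; linarith
  · obtain ⟨D, hD, hB, hle⟩ := hT.direct ha hR (c2 k hk)
    refine ⟨D, hD, hB, hle.trans ?_⟩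
    have : Ck (h k) ≤ s2 := Finset.single_le_sum (f := fun k => Ck (h k)) (fun k _ => n2 k)
      (Finset.mem_range.2 (Nat.lt_succ_of_le hk))
    gcongr; linarith

/-- The case of `bstar` in which the near bounds come from one bound at index `c`: a bound `D` at
index `c` is traded for a bound at a larger index `i`, with `D` multiplied by a weight of `w`. -/
lemma step (hp : ∀ k x, p k x ≤ p (k + 1) x) (ha : IsKotheMatrix a) (H : DualIneq p a)
    (hT : Cont p a l T NT Ck) (c : ℕ) :
    ∃ i, c ≤ i ∧ ∀ (r : ℕ) (h : ℕ → ℕ), ∃ κ : ℕ, ∃ C : ℝ, 0 < C ∧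
      ∀ (w : ℕ) (Y : Finset ℕ) (R D : ℝ), 0 ≤ R → 0 ≤ D →
      Bd p a l T r c Y D → rat a r w i * D ≤ R →
      (∀ k, k ≤ κ → ∀ v ∈ Y, rat a r w k ≤ R * rat a r v (h k)) →
      Bd p a l T r i Y (C * R) := by
  obtain ⟨i, hi, hb⟩ := bstar (l := l) (T := T) hp ha H (fun _ => c) c
  refine ⟨i, hi, fun r h => ?_⟩
  obtain ⟨κ, C, hC, hb⟩ := hb r (fun k => NT (h k))
  have n2 : ∀ k, 0 ≤ Ck (h k) := fun k => hT.nonneg _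
  set s2 := ∑ k ∈ Finset.range (κ + 1), Ck (h k) with hs2
  have hs2' : 0 ≤ s2 := Finset.sum_nonneg fun k _ => n2 k
  refine ⟨κ, C * (1 + s2), by positivity, fun w Y R D hR hD hB hRD c2 => ?_⟩
  have hw := apos ha w r
  rw [mul_assoc]
  refine hb w Y _ (by positivity) (fun k hk => ⟨D, hD, hB, ?_⟩) (fun k hk => ?_)
  · have h1 : a w i * D ≤ R * a w r := by
      have e : rat a r w i * D = a w i * D / a w r := by simp [rat, div_mul_eq_mul_div]
      rwa [e, div_le_iff₀ hw] at hRD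
    calc a w k * D ≤ a w i * D := mul_le_mul_of_nonneg_right (amono ha w hk) hD
      _ ≤ R * a w r := h1
      _ ≤ (1 + s2) * R * a w r := by
        have : 0 ≤ s2 * (R * a w r) := by positivity
        linarith
  · obtain ⟨D, hD, hB, hle⟩ := hT.direct ha hR (c2 k hk)
    refine ⟨D, hD, hB, hle.trans ?_⟩
    have : Ck (h k) ≤ s2 := Finset.single_le_sum (f := fun k => Ck (h k)) (fun k _ => n2 k)
      (Finset.mem_range.2 (Nat.lt_succ_of_le hk))
    gcongr; linarith

/-- One index `i₀` bounds `T`, with a linear loss, on all sets where the ratio of the levels `κ`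
and `r` is bounded. -/
lemma de (hp : ∀ k x, p k x ≤ p (k + 1) x) (ha : IsKotheMatrix a) (H : DualIneq p a)
    (hT : Cont p a l T NT Ck) :
    ∃ i₀ : ℕ, ∀ r : ℕ, ∃ κ, r ≤ κ ∧ ∃ C : ℝ, 0 < C ∧ ∀ (Y : Finset ℕ) (B : ℝ), 1 ≤ B →
      (∀ w ∈ Y, rat a r w κ ≤ B) → Bd p a l T r i₀ Y (C * B) := by
  classical
  choose f hf1 hf2 using fun m => dir hp ha H hT (fun _ => m) (m + 1)
  let K : ℕ → ℕ := fun j => f^[j] 0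
  have hK : ∀ j, K (j + 1) = f (K j) := fun j => Function.iterate_succ_apply' f j 0
  have hKk : ∀ k, k ≤ K k := by
    intro k
    induction k with
    | zero => exact Nat.zero_le _
    | succ k ih => rw [hK]; exact (Nat.succ_le_succ ih).trans (hf1 _)
  have hKmono : Monotone K := monotone_nat_of_le_succ fun j => by
    rw [hK]; exact (Nat.le_succ _).trans (hf1 _)
  obtain ⟨i, -, hi⟩ := dir hp ha H hT (fun k => K (k + 1)) 0
  refine ⟨max i (K (i + 1)), fun r => ?_⟩
  choose κ' C' hC' hb' using fun j => hf2 (K j) r (fun _ => r)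
  obtain ⟨κ, C, hC, hb⟩ := hi r (fun _ => r)
  refine ⟨max r (max κ ((Finset.range (i + 1)).sup κ')), le_max_left _ _,
    (∑ j ∈ Finset.range (i + 1), C' j) + C, ?_, fun Y B hB hY => ?_⟩
  · have := Finset.sum_nonneg fun j (_ : j ∈ Finset.range (i + 1)) => (hC' j).le
    linarith
  have hB0 : 0 ≤ B := by linarith
  rcases Y.eq_empty_or_nonempty with rfl | hne
  · refine Bd.empty.mono ?_
    have := Finset.sum_nonneg fun j (_ : j ∈ Finset.range (i + 1)) => (hC' j).le
    positivity
  have hfar : ∀ w ∈ Y, ∀ k, k ≤ max κ ((Finset.range (i + 1)).sup κ') → ∀ v,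
      rat a r w k ≤ B * rat a r v r := fun w hw k hk v => by
    rw [rat_self ha, mul_one]
    exact (rat_mono ha r w (hk.trans (le_max_right _ _))).trans (hY w hw)
  -- `W j` minimises the level `K (j + 1)` over `Y`.
  choose W hWY hW using fun j => Finset.exists_min_image Y (fun v => rat a r v (K (j + 1))) hne
  let P : ℕ → Finset ℕ := fun j => Y.filter fun v => rat a r (W j) (K (j + 1)) ≤ rat a r v (K j)
  have hP : ∀ j ∈ Finset.range (i + 1), Bd p a l T r (max i (K (i + 1))) (P j) (C' j * B) := by
    intro j hj
    have hbd := hb' j (W j) (P j) B hB0 (fun k hk v hv => by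
        rw [← hK] at hk
        calc _ ≤ _ := rat_mono ha r (W j) hk
          _ ≤ _ := (Finset.mem_filter.1 hv).2
          _ ≤ _ := le_mul_of_one_le_left (rat_pos ha _ _ _).le hB)
      (fun k hk v _ => hfar _ (hWY j) k
        (hk.trans ((Finset.le_sup hj).trans (le_max_right _ _))) v)
    refine hbd.index hp (mul_nonneg (hC' j).le hB0) (le_trans ?_ (le_max_right _ _))
    rw [← hK]
    exact hKmono (by rw [Finset.mem_range] at hj; omega)
  let Q := Y \ (Finset.range (i + 1)).biUnion P
  have hQ : Bd p a l T r (max i (K (i + 1))) Q (C * B) := by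
    rcases Q.eq_empty_or_nonempty with hQ | ⟨w, hw⟩
    · rw [hQ]; exact Bd.empty.mono (by positivity)
    have hlt : ∀ j, j ≤ i → ∀ v ∈ Q, rat a r v (K j) < rat a r (W j) (K (j + 1)) := by
      intro j hj v hv
      rw [Finset.mem_sdiff, Finset.mem_biUnion] at hv
      by_contra hcon
      exact hv.2 ⟨j, Finset.mem_range.2 (by omega),
        Finset.mem_filter.2 ⟨hv.1, not_lt.1 hcon⟩⟩
    refine (hb w Q B hB0 (fun k hk v hv => ?_) (fun k hk v _ => ?_)).index hp (by positivity)
      (le_max_left _ _)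
    · calc rat a r w k ≤ rat a r w (K k) := rat_mono ha r w (hKk k)
        _ ≤ rat a r (W k) (K (k + 1)) := (hlt k hk w hw).le
        _ ≤ rat a r v (K (k + 1)) := hW k v (Finset.mem_sdiff.1 hv).1
        _ ≤ _ := le_mul_of_one_le_left (rat_pos ha _ _ _).le hB
    · exact hfar w (Finset.mem_sdiff.1 hw).1 k (hk.trans (le_max_left _ _)) v
  have hall := (Bd.biUnion _ P _ hP).union hQ
  rw [← Finset.sum_mul, ← add_mul] at hall
  refine hall.subset fun v hv => ?_
  by_cases h : v ∈ (Finset.range (i + 1)).biUnion P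
  · exact Finset.mem_union_left _ h
  · exact Finset.mem_union_right _ (Finset.mem_sdiff.2 ⟨hv, h⟩)

end Estimates

/-! ### Cutting a finite set at the jumps of its levels -/

section Combinatorics

/-- A set `G` on which one index `w`, at least as large as `G` in the order of `lam`, is comparable
with all of `G`: either at one pair of consecutive levels, or at all levels up to `S` with a shift
by two. -/
def Piece (S : ℕ) (lam : ℕ → ℕ) (Z : ℕ → ℕ → ℕ) (G : Finset ℕ) : Prop :=
  ∃ w, (∀ v ∈ G, lam v ≤ lam w) ∧
    ((∃ s ≤ S, ∀ v ∈ G, Z (s + 1) w ≤ Z s v) ∨ (∀ s ≤ S, ∀ v ∈ G, Z s w ≤ Z (s + 2) v))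

/-- The level `s` jumps between the thresholds `n` and `n'`: one point above `n` has `Z (s + 1)`
smaller than `Z s` at every point above `n'`. -/
def Jump (F : Finset ℕ) (lam : ℕ → ℕ) (Z : ℕ → ℕ → ℕ) (s n n' : ℕ) : Prop :=
  ∃ w ∈ F, n ≤ lam w ∧ ∀ v ∈ F, n' ≤ lam v → Z (s + 1) w < Z s v

variable {F : Finset ℕ} {lam : ℕ → ℕ} {Z : ℕ → ℕ → ℕ}

/-- Jumps accumulate: `c` jumps of level `s` between the thresholds `N a` and `N b` separate the
values by `c`. -/
lemma jump_count (hZ : ∀ s v, Z s v ≤ Z (s + 1) v) {N : ℕ → ℕ} (hN : Monotone N) {col : ℕ → ℕ}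
    {s a b : ℕ} (hab : a ≤ b)
    (hJ : ∀ t, t < b → col t = s → Jump F lam Z s (N t) (N (t + 1)))
    (hc : 1 ≤ ((Finset.Ico a b).filter fun t => col t = s).card) :
    ∃ w ∈ F, N a ≤ lam w ∧ ∀ v ∈ F, N b ≤ lam v →
      Z (s + 1) w + ((Finset.Ico a b).filter fun t => col t = s).card ≤ Z s v := by
  induction b, hab using Nat.le_induction with
  | base => simp at hc
  | succ b hab ih =>
    have e : Finset.Ico a (b + 1) = insert b (Finset.Ico a b) := by
      ext x; simp only [Finset.mem_Ico, Finset.mem_insert]; omega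
    rw [e, Finset.filter_insert] at hc ⊢
    by_cases hs : col b = s
    · rw [if_pos hs, Finset.card_insert_of_notMem (by simp)]
      obtain ⟨wb, hwb, hl, hlt⟩ := hJ b (Nat.lt_succ_self b) hs
      by_cases h0 : 1 ≤ ((Finset.Ico a b).filter fun t => col t = s).card
      · obtain ⟨w, hw, hwl, hwz⟩ := ih (fun t ht => hJ t (ht.trans (Nat.lt_succ_self b))) h0
        refine ⟨w, hw, hwl, fun v hv hvl => ?_⟩
        have h1 := hlt v hv hvl
        have h2 := hwz wb hwb hl
        have h3 := hZ s wb
        omega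
      · refine ⟨wb, hwb, (hN hab).trans hl, fun v hv hvl => ?_⟩
        have h1 := hlt v hv hvl
        omega
    · rw [if_neg hs] at hc ⊢
      obtain ⟨w, hw, hwl, hwz⟩ := ih (fun t ht => hJ t (ht.trans (Nat.lt_succ_self b))) hc
      exact ⟨w, hw, hwl, fun v hv hvl => hwz v hv ((hN (Nat.le_succ b)).trans hvl)⟩

/-- A block of `F` containing no jump at its last threshold is a union of `S + 2` pieces. -/
lemma block_pieces (S n n' : ℕ)
    (hJ : ∀ s, 1 ≤ s → s ≤ S + 1 → ¬ Jump F lam Z s n n') :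
    ∃ G : ℕ → Finset ℕ,
      (F.filter fun v => n ≤ lam v ∧ lam v < n' + 1) ⊆ (Finset.range (S + 2)).biUnion G ∧
      ∀ j, Piece S lam Z (G j) := by
  classical
  set B := F.filter fun v => n ≤ lam v ∧ lam v < n' + 1 with hB
  rcases B.eq_empty_or_nonempty with h0 | ⟨v0, hv0⟩
  · refine ⟨fun _ => ∅, by simp [h0], fun j => ⟨0, by simp, Or.inl ⟨0, by simp, by simp⟩⟩⟩
  have hmem : ∀ v ∈ B, v ∈ F ∧ n ≤ lam v ∧ lam v ≤ n' := fun v hv => by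
    rw [hB, Finset.mem_filter] at hv; exact ⟨hv.1, hv.2.1, by omega⟩
  have hJ' : ∀ s, 1 ≤ s → s ≤ S + 1 → ∀ w ∈ F, n ≤ lam w →
      ∃ v ∈ F, n' ≤ lam v ∧ Z s v ≤ Z (s + 1) w := by
    intro s h1 h2 w hw hwl
    by_contra hcon
    refine hJ s h1 h2 ⟨w, hw, hwl, fun v hv hvl => ?_⟩
    by_contra h3
    exact hcon ⟨v, hv, hvl, not_lt.1 h3⟩
  have hne : (F.filter fun v => n' ≤ lam v).Nonempty := by
    obtain ⟨v, hv, hvl, -⟩ := hJ' 1 le_rfl (by omega) v0 (hmem v0 hv0).1 (hmem v0 hv0).2.1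
    exact ⟨v, Finset.mem_filter.2 ⟨hv, hvl⟩⟩
  choose W hW1 hW2 using fun s => Finset.exists_min_image _ (Z s) hne
  have hWZ : ∀ s, 1 ≤ s → s ≤ S + 1 → ∀ v ∈ B, Z s (W s) ≤ Z (s + 1) v := by
    intro s h1 h2 v hv
    obtain ⟨v', hv', hvl, hle⟩ := hJ' s h1 h2 v (hmem v hv).1 (hmem v hv).2.1
    exact (hW2 s v' (Finset.mem_filter.2 ⟨hv', hvl⟩)).trans hle
  let G : ℕ → Finset ℕ := fun j =>
    if j ≤ S then B.filter fun v => Z (j + 1) (W (j + 1)) ≤ Z j v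
    else B.filter fun v => ∀ s ≤ S, Z s v < Z (s + 1) (W (s + 1))
  refine ⟨G, fun v hv => ?_, fun j => ?_⟩
  · rw [Finset.mem_biUnion]
    by_cases h : ∃ s ≤ S, Z (s + 1) (W (s + 1)) ≤ Z s v
    · obtain ⟨s, hs, hle⟩ := h
      exact ⟨s, Finset.mem_range.2 (by omega), by
        simp only [G, if_pos hs]; exact Finset.mem_filter.2 ⟨hv, hle⟩⟩
    · push Not at h
      exact ⟨S + 1, Finset.mem_range.2 (by omega), by
        simp only [G, if_neg (show ¬ S + 1 ≤ S by omega)]; exact Finset.mem_filter.2 ⟨hv, h⟩⟩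
  · by_cases hj : j ≤ S
    · simp only [G, if_pos hj]
      refine ⟨W (j + 1), fun v hv => ?_, Or.inl ⟨j, hj, fun v hv => (Finset.mem_filter.1 hv).2⟩⟩
      exact (hmem v (Finset.mem_filter.1 hv).1).2.2.trans (Finset.mem_filter.1 (hW1 (j + 1))).2
    · simp only [G, if_neg hj]
      set Q := B.filter fun v => ∀ s ≤ S, Z s v < Z (s + 1) (W (s + 1))
      rcases Q.eq_empty_or_nonempty with hQ | hQ
      · rw [hQ]; exact ⟨0, by simp, Or.inl ⟨0, by simp, by simp⟩⟩
      obtain ⟨w, hw, hmax⟩ := Finset.exists_max_image Q lam hQ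
      refine ⟨w, hmax, Or.inr fun s hs v hv => ?_⟩
      exact ((Finset.mem_filter.1 hw).2 s hs).le.trans
        (hWZ (s + 1) (by omega) (by omega) v (Finset.mem_filter.1 hv).1)

/-- The thresholds `N t`, at each of which some level jumps, cut `F` into blocks. Each block is a
union of `S + 2` pieces, and the `t`-th block is separated from a point above `t / 2` by an amount
proportional to `t`. -/
lemma comb (hZ : ∀ s v, Z s v ≤ Z (s + 1) v) (S : ℕ) :
    ∃ N : ℕ → ℕ, N 0 = 0 ∧ StrictMono N ∧
      (∀ t, ∃ G : ℕ → Finset ℕ,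
        (F.filter fun v => N t ≤ lam v ∧ lam v < N (t + 1)) ⊆ (Finset.range (S + 2)).biUnion G ∧
        ∀ j, Piece S lam Z (G j)) ∧
      (∀ t, 1 ≤ t → (F.filter fun v => N t ≤ lam v ∧ lam v < N (t + 1)).Nonempty →
        ∃ s ≤ S + 1, ∃ c w, t ≤ 2 * (S + 1) * c ∧ t / 2 ≤ lam w ∧
          ∀ v ∈ F.filter (fun v => N t ≤ lam v ∧ lam v < N (t + 1)), Z (s + 1) w + c ≤ Z s v) := by
  classical
  -- `nx n` is the least threshold at which some level has jumped since `n`.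
  have hex : ∀ n, ∃ n', n < n' ∧
      (∀ s, 1 ≤ s → s ≤ S + 1 → (∃ v ∈ F, n ≤ lam v) → ¬ Jump F lam Z s n (n' - 1)) ∧
      ((∃ v ∈ F, n ≤ lam v) → ∃ s, 1 ≤ s ∧ s ≤ S + 1 ∧ Jump F lam Z s n n') := by
    intro n
    by_cases hv : ∃ v ∈ F, n ≤ lam v
    · have h : ∃ n', ∃ s, 1 ≤ s ∧ s ≤ S + 1 ∧ Jump F lam Z s n n' := by
        obtain ⟨v, hvF, hvn⟩ := hv
        refine ⟨F.sup lam + 1, 1, le_rfl, by omega, v, hvF, hvn, fun v' hv' hl => ?_⟩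
        have := Finset.le_sup (f := lam) hv'
        omega
      have hspec := Nat.find_spec h
      have hgt : n < Nat.find h := by
        by_contra hcon
        obtain ⟨s, -, -, w, hw, hwl, hlt⟩ := hspec
        have := hlt w hw ((not_lt.1 hcon).trans hwl)
        have := hZ s w
        omega
      refine ⟨Nat.find h, hgt, fun s h1 h2 _ hJ => ?_, fun _ => hspec⟩
      exact Nat.find_min h (m := Nat.find h - 1) (by omega) ⟨s, h1, h2, hJ⟩
    · exact ⟨n + 1, Nat.lt_succ_self n, fun s _ _ h => absurd h hv, fun h => absurd h hv⟩
  choose nx hnx1 hnx2 hnx3 using hex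
  let N : ℕ → ℕ := fun t => nx^[t] 0
  have hNs : ∀ t, N (t + 1) = nx (N t) := fun t => Function.iterate_succ_apply' nx t 0
  have hmono : StrictMono N := strictMono_nat_of_lt_succ fun t => by rw [hNs]; exact hnx1 _
  refine ⟨N, rfl, hmono, fun t => ?_, fun t ht hne => ?_⟩
  · by_cases hv : ∃ v ∈ F, N t ≤ lam v
    · have h := block_pieces (F := F) (lam := lam) (Z := Z) S (N t) (N (t + 1) - 1)
        (fun s h1 h2 => by rw [hNs]; exact hnx2 (N t) s h1 h2 hv)
      rwa [Nat.sub_add_cancel (by rw [hNs]; exact (Nat.zero_le _).trans_lt (hnx1 _))] at h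
    · refine ⟨fun _ => ∅, fun v hv' => ?_, fun j => ⟨0, by simp, Or.inl ⟨0, by simp, by simp⟩⟩⟩
      rw [Finset.mem_filter] at hv'
      exact absurd ⟨v, hv'.1, hv'.2.1⟩ hv
  · obtain ⟨v0, hv0⟩ := hne
    rw [Finset.mem_filter] at hv0
    have hcol : ∀ t', ∃ s, t' < t → 1 ≤ s ∧ s ≤ S + 1 ∧ Jump F lam Z s (N t') (N (t' + 1)) := by
      intro t'
      by_cases h : t' < t
      · obtain ⟨s, hs⟩ := hnx3 (N t') ⟨v0, hv0.1, (hmono h).le.trans hv0.2.1⟩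
        rw [← hNs] at hs
        exact ⟨s, fun _ => hs⟩
      · exact ⟨0, fun h' => absurd h' h⟩
    choose col hcol using hcol
    have hmaps : ∀ x ∈ Finset.Ico (t / 2) t, col x ∈ Finset.Icc 1 (S + 1) := fun x hx => by
      have := hcol x (Finset.mem_Ico.1 hx).2
      exact Finset.mem_Icc.2 ⟨this.1, this.2.1⟩
    have hcard := Finset.card_eq_sum_card_fiberwise hmaps
    obtain ⟨s, hs, hsmax⟩ := Finset.exists_max_image (Finset.Icc 1 (S + 1))
      (fun s => ((Finset.Ico (t / 2) t).filter fun x => col x = s).card)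
      ⟨1, Finset.mem_Icc.2 ⟨le_rfl, by omega⟩⟩
    have hle := Finset.sum_le_card_nsmul _ _ _ hsmax
    rw [← hcard] at hle
    simp only [Nat.card_Ico, Nat.card_Icc, smul_eq_mul, Nat.add_sub_cancel] at hle
    set c := ((Finset.Ico (t / 2) t).filter fun x => col x = s).card with hc
    have hc1 : 1 ≤ c := by
      rcases Nat.eq_zero_or_pos c with h | h
      · rw [h, mul_zero] at hle; omega
      · exact h
    obtain ⟨w, -, hwl, hwz⟩ := jump_count (F := F) (lam := lam) hZ hmono.monotone
      (col := col) (s := s) (a := t / 2) (b := t) (by omega)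
      (fun t' ht' hs' => hs' ▸ (hcol t' ht').2.2) hc1
    refine ⟨s, (Finset.mem_Icc.1 hs).2, c, w, ?_, (hmono.le_apply).trans hwl, fun v hv => ?_⟩
    · rw [mul_assoc]; omega
    · rw [Finset.mem_filter] at hv
      exact hwz v hv.1 hv.2.1

end Combinatorics

/-! ### The dual inequality implies boundedness -/

section Sufficiency
variable {E : Type*} [AddCommGroup E] [Module ℝ E]
variable {p : ℕ → Seminorm ℝ E} {a : ℕ → ℕ → ℝ} {l : MonoBanachSeqSpace} {T : E →ₗ[ℝ] (ℕ → ℝ)}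
variable {NT : ℕ → ℕ} {Ck : ℕ → ℝ}

/-- The indices `i₂ ≤ i₃` and, for each large `r`, levels `κ s` such that `T` is bounded at index
`i₂` on every set that is comparable with one index `w` in the sense of `Piece`, while a bound at
index `i₂` improves at index `i₃` on sets separated from some index `w`. -/
lemma setup (hp : ∀ k x, p k x ≤ p (k + 1) x) (ha : IsKotheMatrix a) (H : DualIneq p a)
    (hT : Cont p a l T NT Ck) :
    ∃ i₂ i₃ κL : ℕ, i₂ ≤ i₃ ∧ i₃ ≤ κL ∧ ∀ r, κL ≤ r →
      ∃ (κ : ℕ → ℕ) (S : ℕ) (C₂ C₃ : ℝ), κ 0 = r ∧ Monotone κ ∧ 0 < C₂ ∧ 0 < C₃ ∧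
      (∀ (w : ℕ) (Y : Finset ℕ), (∀ v ∈ Y, rat a r w i₃ ≤ 2 * rat a r v i₃) →
        ((∃ s ≤ S, ∀ v ∈ Y, rat a r w (κ (s + 1)) ≤ 2 * rat a r v (κ s)) ∨
          (∀ s ≤ S, ∀ v ∈ Y, rat a r w (κ s) ≤ 2 * rat a r v (κ (s + 2)))) →
        Bd p a l T r i₂ Y C₂) ∧
      (∀ s ≤ S + 1, ∀ (w : ℕ) (Y : Finset ℕ) (R D : ℝ), 0 ≤ R → 0 ≤ D → Bd p a l T r i₂ Y D →
        rat a r w i₃ * D ≤ R → (∀ v ∈ Y, rat a r w (κ (s + 1)) ≤ R * rat a r v (κ s)) →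
        Bd p a l T r i₃ Y (C₃ * R)) := by
  obtain ⟨i₀, h0⟩ := de hp ha H hT
  obtain ⟨i₁, hi1, h1⟩ := step hp ha H hT i₀
  obtain ⟨i₂, hi2, h2⟩ := step hp ha H hT i₁
  obtain ⟨i₃, hi3, h3⟩ := step hp ha H hT i₂
  obtain ⟨κL, hκL, C0, hC0, h0⟩ := h0 i₃
  refine ⟨i₂, i₃, κL, hi3, hκL, fun r hr => ?_⟩
  choose k1 c1 hc1 f1 using h1 r
  choose k2 c2 hc2 f2 using h2 r
  choose k3 c3 hc3 f3 using h3 r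
  let nx : ℕ → ℕ := fun q => max q (max (k1 fun _ => q) (max (k2 fun _ => q) (k3 fun _ => q))) + 1
  let κ : ℕ → ℕ := fun s => nx^[s] r
  have hκs : ∀ s, κ (s + 1) = nx (κ s) := fun s => Function.iterate_succ_apply' nx s r
  have hκlt : StrictMono κ := strictMono_nat_of_lt_succ fun s => by
    rw [hκs]; exact Nat.lt_succ_of_le (le_max_left _ _)
  have hk1 : ∀ s, (k1 fun _ => κ s) ≤ κ (s + 1) := fun s => by
    rw [hκs]; simp only [nx]; omega
  have hk2 : ∀ s, (k2 fun _ => κ s) ≤ κ (s + 1) := fun s => by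
    rw [hκs]; simp only [nx]; omega
  have hk3 : ∀ s, (k3 fun _ => κ s) ≤ κ (s + 1) := fun s => by
    rw [hκs]; simp only [nx]; omega
  let hinf : ℕ → ℕ := fun k => κ (k + 2)
  let S := max (k1 hinf) (k2 hinf)
  -- The two steps, for one choice `g` of the far levels.
  have two : ∀ g : ℕ → ℕ, ∃ C : ℝ, 0 < C ∧ ∀ (w : ℕ) (Y : Finset ℕ),
      (∀ v ∈ Y, rat a r w i₃ ≤ 2 * rat a r v i₃) →
      (∀ k, k ≤ max (k1 g) (k2 g) → ∀ v ∈ Y, rat a r w k ≤ 2 * rat a r v (g k)) →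
      Bd p a l T r i₂ Y C := by
    intro g
    have hc1g := hc1 g
    have hc2g := hc2 g
    refine ⟨c2 g * (2 + c1 g * (2 + 4 * C0)), by positivity, fun w Y hβ hfar => ?_⟩
    set β := rat a r w i₃ with hβdef
    have hβ0 : 0 < β := rat_pos ha _ _ _
    have hβ1 : β ≤ 1 := by
      rw [← rat_self ha r w]; exact rat_mono ha r w (hκL.trans hr)
    have hB1 : 1 ≤ 2 / β := by rw [le_div_iff₀ hβ0]; linarith
    have hbnd : ∀ v ∈ Y, a v r ≤ 2 / β * a v i₃ := fun v hv => by
      have h := hβ v hv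
      have hvr := apos ha v r
      have e : 2 * rat a r v i₃ = 2 * a v i₃ / a v r := by simp [rat, mul_div_assoc]
      rw [e, le_div_iff₀ hvr] at h
      rw [div_mul_eq_mul_div, le_div_iff₀ hβ0]
      linarith
    have d0 := (h0 Y (2 / β) hB1 (fun v hv => by
      refine (rat_mono ha i₃ v hr).trans ?_
      unfold rat
      rw [div_le_iff₀ (apos ha v i₃)]
      exact hbnd v hv)).ref ha (by positivity) hbnd
    have d1 := f1 g w Y (2 + 4 * C0 / β) _ (by positivity) (by positivity) d0 (by
        calc rat a r w i₁ * (2 / β * (C0 * (2 / β))) ≤ β * (2 / β * (C0 * (2 / β))) := by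
              gcongr; exact rat_mono ha r w (hi2.trans hi3)
          _ = 4 * C0 / β := by field_simp; ring
          _ ≤ _ := by linarith)
      (fun k hk v hv => (hfar k (hk.trans (le_max_left _ _)) v hv).trans (by
        have := rat_pos ha r v (g k)
        gcongr
        have : 0 ≤ 4 * C0 / β := by positivity
        linarith))
    exact f2 g w Y (2 + c1 g * (2 + 4 * C0)) _ (by positivity) (by positivity) d1 (by
        calc rat a r w i₂ * (c1 g * (2 + 4 * C0 / β)) ≤ β * (c1 g * (2 + 4 * C0 / β)) := by
              gcongr; exact rat_mono ha r w hi3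
          _ = c1 g * (2 * β + 4 * C0) := by field_simp
          _ ≤ c1 g * (2 * 1 + 4 * C0) := by gcongr
          _ ≤ _ := by linarith)
      (fun k hk v hv => (hfar k (hk.trans (le_max_right _ _)) v hv).trans (by
        have := rat_pos ha r v (g k)
        gcongr
        have : 0 ≤ c1 g * (2 + 4 * C0) := by positivity
        linarith))
  choose c hc hcb using two
  refine ⟨κ, S, c hinf + ∑ s ∈ Finset.range (S + 1), c fun _ => κ s,
    ∑ s ∈ Finset.range (S + 2), c3 fun _ => κ s, rfl, hκlt.monotone, ?_, ?_, ?_, ?_⟩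
  · have := Finset.sum_nonneg fun s (_ : s ∈ Finset.range (S + 1)) => (hc fun _ => κ s).le
    have := hc hinf
    linarith
  · exact Finset.sum_pos (fun s _ => hc3 _) ⟨0, Finset.mem_range.2 (by omega)⟩
  · rintro w Y hβ (⟨s, hs, hfar⟩ | hfar)
    · refine (hcb (fun _ => κ s) w Y hβ fun k hk v hv => ?_).mono ?_
      · exact (rat_mono ha r w (hk.trans (max_le (hk1 s) (hk2 s)))).trans (hfar v hv)
      · have := Finset.single_le_sum (f := fun s => c fun _ => κ s) (fun s _ => (hc _).le)
          (Finset.mem_range.2 (Nat.lt_succ_of_le hs))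
        have := hc hinf
        linarith
    · refine (hcb hinf w Y hβ fun k hk v hv => ?_).mono ?_
      · exact (rat_mono ha r w hκlt.le_apply).trans (hfar k hk v hv)
      · have := Finset.sum_nonneg fun s (_ : s ∈ Finset.range (S + 1)) => (hc fun _ => κ s).le
        linarith
  · intro s hs w Y R D hR hD hB hRD hfar
    refine (f3 (fun _ => κ s) w Y R D hR hD hB hRD fun k hk v hv => ?_).mono ?_
    · exact (rat_mono ha r w (hk.trans (hk3 s))).trans (hfar v hv)
    · have := Finset.single_le_sum (f := fun s => c3 fun _ => κ s) (fun s _ => (hc3 _).le)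
        (Finset.mem_range.2 (Nat.lt_succ_of_le hs))
      gcongr

/-- A common geometric rate for the two gains `2⁻¹ ^ c` and `2⁻¹ ^ (t / 2)`. -/
lemma exists_rate (S : ℕ) : ∃ θ : ℝ, 0 < θ ∧ θ < 1 ∧
    (∀ t c : ℕ, t ≤ 2 * (S + 1) * c → (2⁻¹ : ℝ) ^ c ≤ θ ^ t) ∧
    (∀ t : ℕ, (2⁻¹ : ℝ) ^ (t / 2) ≤ 2 * θ ^ t) := by
  set q : ℕ := 2 * (S + 1) with hq
  have hq2 : (2 : ℝ) ≤ q := by rw [hq]; push_cast; linarith [(Nat.cast_nonneg S : (0 : ℝ) ≤ S)]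
  have hx : (2 * (q : ℝ))⁻¹ ≤ 4⁻¹ := by apply inv_anti₀ <;> linarith
  have hx0 : 0 < (2 * (q : ℝ))⁻¹ := by positivity
  set θ : ℝ := 1 + -(2 * (q : ℝ))⁻¹ with hθ
  have h0 : 0 < θ := by rw [hθ]; linarith
  have h1 : θ < 1 := by rw [hθ]; linarith
  have hθq : (2⁻¹ : ℝ) ≤ θ ^ q := by
    have h := one_add_mul_le_pow (a := -(2 * (q : ℝ))⁻¹) (by linarith) q
    refine le_trans (le_of_eq ?_) h
    field_simp; norm_num
  have hθ2 : (2⁻¹ : ℝ) ≤ θ ^ 2 :=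
    hθq.trans (pow_le_pow_of_le_one h0.le h1.le (by omega))
  refine ⟨θ, h0, h1, fun t c h => ?_, fun t => ?_⟩
  · calc (2⁻¹ : ℝ) ^ c ≤ (θ ^ q) ^ c := by gcongr
      _ = θ ^ (q * c) := (pow_mul _ _ _).symm
      _ ≤ θ ^ t := pow_le_pow_of_le_one h0.le h1.le h
  · have hθ1 : (1 : ℝ) ≤ 2 * θ := by rw [hθ]; linarith
    calc (2⁻¹ : ℝ) ^ (t / 2) ≤ (θ ^ 2) ^ (t / 2) := by gcongr
      _ = θ ^ (2 * (t / 2)) := (pow_mul _ _ _).symm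
      _ ≤ (2 * θ) * θ ^ (2 * (t / 2)) := le_mul_of_one_le_left (by positivity) hθ1
      _ = 2 * θ ^ (2 * (t / 2) + 1) := by ring
      _ ≤ 2 * θ ^ t := by
        exact mul_le_mul_of_nonneg_left (pow_le_pow_of_le_one h0.le h1.le (by omega)) two_pos.le

/-- One index `i` bounds all finite pieces of `T` at every large level `r`. -/
lemma finite_bound (hp : ∀ k x, p k x ≤ p (k + 1) x) (ha : IsKotheMatrix a) (H : DualIneq p a)
    (hT : Cont p a l T NT Ck) :
    ∃ i κL : ℕ, ∀ r, κL ≤ r → ∃ C : ℝ, 0 ≤ C ∧ ∀ F : Finset ℕ, Bd p a l T r i F C := by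
  classical
  obtain ⟨i₂, i₃, κL, h23, h3L, hset⟩ := setup hp ha H hT
  refine ⟨i₃, κL, fun r hr => ?_⟩
  obtain ⟨κ, S, C₂, C₃, hκ0, hκm, hC₂, hC₃, hA, hB⟩ := hset r hr
  obtain ⟨θ, hθ0, hθ1, hθc, hθh⟩ := exists_rate S
  set D : ℝ := (S + 2 : ℕ) * C₂ with hD
  have hD0 : 0 ≤ D := by positivity
  set K : ℝ := D + C₃ * (2 + 2 * D) with hK
  have hK0 : 0 ≤ K := by positivity
  refine ⟨K * (1 - θ)⁻¹, mul_nonneg hK0 (inv_nonneg.2 (by linarith)), fun F => ?_⟩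
  -- Dyadic approximations of `a v r / a v i₃` and of `rat a r v (κ s)`.
  have hl : ∀ v, ∃ n : ℕ, (2 : ℝ) ^ n ≤ (rat a r v i₃)⁻¹ ∧ (rat a r v i₃)⁻¹ < 2 ^ (n + 1) :=
    fun v => exists_nat_pow_near ((one_le_inv₀ (rat_pos ha _ _ _)).2
      ((rat_mono ha r v (h3L.trans hr)).trans (rat_self ha r v).le)) one_lt_two
  have hz : ∀ s v, ∃ n : ℕ, (2 : ℝ) ^ n ≤ rat a r v (κ s) ∧ rat a r v (κ s) < 2 ^ (n + 1) :=
    fun s v => exists_nat_pow_near ((rat_self ha r v).symm.le.trans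
      (rat_mono ha r v (hκ0 ▸ hκm (Nat.zero_le s)))) one_lt_two
  choose lam hl1 hl2 using hl
  choose Z hz1 hz2 using hz
  have hZ : ∀ s v, Z s v ≤ Z (s + 1) v := fun s v => by
    have h : (2 : ℝ) ^ Z s v < 2 ^ (Z (s + 1) v + 1) :=
      ((hz1 s v).trans (rat_mono ha r v (hκm (Nat.le_succ s)))).trans_lt (hz2 (s + 1) v)
    exact Nat.lt_succ_iff.1 ((pow_lt_pow_iff_right₀ one_lt_two).1 h)
  have hcmp : ∀ {s s' w v c}, Z s' w + c ≤ Z s v →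
      rat a r w (κ s') ≤ 2 * 2⁻¹ ^ c * rat a r v (κ s) := by
    intro s s' w v c h
    calc rat a r w (κ s') ≤ 2 ^ (Z s' w + 1) := (hz2 s' w).le
      _ = 2 * 2⁻¹ ^ c * 2 ^ (Z s' w + c) := by
        rw [pow_add, pow_add, inv_pow]; field_simp
      _ ≤ 2 * 2⁻¹ ^ c * 2 ^ Z s v := by
        gcongr; norm_num
      _ ≤ _ := by gcongr; exact hz1 s v
  have hPiece : ∀ G : Finset ℕ, Piece S lam Z G → Bd p a l T r i₂ G C₂ := by
    rintro G ⟨w, hw, hG⟩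
    refine hA w G (fun v hv => ?_) ?_
    · have hvw : (rat a r v i₃)⁻¹ ≤ 2 * (rat a r w i₃)⁻¹ :=
        calc (rat a r v i₃)⁻¹ ≤ 2 ^ (lam v + 1) := (hl2 v).le
          _ ≤ 2 ^ (lam w + 1) := by
            have := hw v hv
            gcongr; norm_num
          _ = 2 * 2 ^ lam w := by ring
          _ ≤ _ := by gcongr; exact hl1 w
      have h1 := rat_pos ha r v i₃
      have h2 := rat_pos ha r w i₃
      rw [← div_eq_mul_inv, le_div_iff₀ h2, inv_mul_le_iff₀ h1] at hvw
      linarith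
    · rcases hG with ⟨s, hs, h⟩ | h
      · exact Or.inl ⟨s, hs, fun v hv => by simpa using hcmp (c := 0) (h v hv)⟩
      · exact Or.inr fun s hs v hv => by simpa using hcmp (c := 0) (h s hs v hv)
  obtain ⟨N, hN0, hNm, hcov, hgain⟩ := comb (F := F) (lam := lam) hZ S
  let B : ℕ → Finset ℕ := fun t => F.filter fun v => N t ≤ lam v ∧ lam v < N (t + 1)
  have hB2 : ∀ t, Bd p a l T r i₂ (B t) D := fun t => by
    obtain ⟨G, hG1, hG2⟩ := hcov t
    have h := (Bd.biUnion (Finset.range (S + 2)) G (fun _ => C₂)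
      fun j _ => hPiece _ (hG2 j)).subset hG1
    rwa [Finset.sum_const, Finset.card_range, nsmul_eq_mul] at h
  have hB3 : ∀ t, Bd p a l T r i₃ (B t) (K * θ ^ t) := fun t => by
    rcases (B t).eq_empty_or_nonempty with h0 | hne
    · rw [h0]; exact Bd.empty.mono (by positivity)
    rcases Nat.eq_zero_or_pos t with rfl | ht
    · refine ((hB2 0).index hp hD0 h23).mono ?_
      rw [pow_zero, mul_one, hK]
      have : 0 ≤ C₃ * (2 + 2 * D) := by positivity
      linarith
    obtain ⟨s, hs, c, w, hc, hwl, hsep⟩ := hgain t ht hne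
    have hβw : rat a r w i₃ ≤ 2⁻¹ ^ (t / 2) := by
      have h1 : (2 : ℝ) ^ (t / 2) ≤ (rat a r w i₃)⁻¹ :=
        (pow_le_pow_right₀ one_le_two hwl).trans (hl1 w)
      rw [inv_pow]
      exact (le_inv_comm₀ (rat_pos ha _ _ _) (by positivity)).2 h1
    have h1 := hθc t c hc
    have h2 := hθh t
    refine (hB s hs w (B t) (2 * 2⁻¹ ^ c + 2⁻¹ ^ (t / 2) * D) D (by positivity) hD0 (hB2 t) ?_
      fun v hv => (hcmp (hsep v hv)).trans ?_).mono ?_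
    · have : rat a r w i₃ * D ≤ 2⁻¹ ^ (t / 2) * D := mul_le_mul_of_nonneg_right hβw hD0
      have : (0 : ℝ) ≤ 2 * 2⁻¹ ^ c := by positivity
      linarith
    · refine mul_le_mul_of_nonneg_right ?_ (rat_pos ha _ _ _).le
      have : (0 : ℝ) ≤ 2⁻¹ ^ (t / 2) * D := by positivity
      linarith
    · calc C₃ * (2 * 2⁻¹ ^ c + 2⁻¹ ^ (t / 2) * D) ≤ C₃ * (2 * θ ^ t + 2 * θ ^ t * D) := by gcongr
        _ = C₃ * (2 + 2 * D) * θ ^ t := by ring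
        _ ≤ K * θ ^ t := by
          rw [hK]; gcongr; linarith
  refine ((Bd.biUnion (Finset.range (F.sup lam + 1)) B _ fun t _ => hB3 t).subset
    fun v hv => ?_).mono ?_
  · -- `v` lies in the block of the last threshold not exceeding `lam v`.
    have hv0 : N 0 ≤ lam v := by rw [hN0]; exact Nat.zero_le _
    have hspec := Nat.findGreatest_spec (P := fun t => N t ≤ lam v) (Nat.zero_le (lam v)) hv0
    set t := Nat.findGreatest (fun t => N t ≤ lam v) (lam v) with ht
    have hlt : lam v < N (t + 1) := by
      by_contra hcon
      push Not at hcon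
      have h1 := Nat.le_findGreatest (P := fun t => N t ≤ lam v)
        ((hNm.le_apply (x := t + 1)).trans hcon) hcon
      omega
    have hle : t ≤ lam v := Nat.findGreatest_le _
    have hsup := Finset.le_sup (f := lam) hv
    exact Finset.mem_biUnion.2 ⟨t, Finset.mem_range.2 (by omega),
      Finset.mem_filter.2 ⟨hv, hspec, hlt⟩⟩
  · rw [← Finset.mul_sum]
    gcongr
    rw [← tsum_geometric_of_lt_one hθ0.le hθ1]
    exact (summable_geometric_of_lt_one hθ0.le hθ1).sum_le_tsum _ fun _ _ => by positivity

lemma opSeminorm_lt_top_iff (hmem : ∀ x, memLamL l a (T x))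
    (k m : ℕ) :
    opSeminorm (fun _ : E => True) (fun x => p m x) (lamLNorm l a k) T < ⊤ ↔
      ∃ C : ℝ, 0 ≤ C ∧ ∀ x, l.nrm (fun n => T x n * a n k) ≤ C * p m x := by
  constructor
  · intro h
    refine ⟨(opSeminorm (fun _ : E => True) (fun x => p m x) (lamLNorm l a k) T).toReal,
      ENNReal.toReal_nonneg, le_mul_of_unit_ball (p m)
      (fun x => l.nrm (fun n => T x n * a n k)) (fun c x => ?_) fun x hx => ?_⟩
    · rw [← l.nrm_smul c (hmem x k)]
      congr 1; ext n; simp [mul_assoc]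
    · have := le_iSup (fun x : {x : E // True ∧ p m x ≤ 1} =>
        ENNReal.ofReal (lamLNorm l a k (T x.1))) ⟨x, trivial, hx⟩
      exact (ENNReal.ofReal_le_iff_le_toReal h.ne).1 this
  · rintro ⟨C, hC, h⟩
    refine lt_of_le_of_lt (iSup_le fun x => ?_) (ENNReal.ofReal_lt_top (r := C))
    refine ENNReal.ofReal_le_ofReal ((h x.1).trans ?_)
    simpa using mul_le_mul_of_nonneg_left x.2.2 hC

/-- Bounds on all finite pieces pass to the whole operator. -/
lemma nrm_le_of_bd {x : E} (hmem : ∀ x, memLamL l a (T x)) {r i : ℕ} {C : ℝ}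
    (h : ∀ F : Finset ℕ, Bd p a l T r i F C) : l.nrm (fun n => T x n * a n r) ≤ C * p i x := by
  refine le_of_forall_pos_le_add fun ε hε => ?_
  obtain ⟨F, hF⟩ := l.expand (x := fun n => T x n * a n r) (fun _ => 1) (hmem x r)
    (fun _ => by simp) ε hε
  have h1 := hF F subset_rfl
  have e : (∑ n ∈ F, ((1 : ℝ) * (T x n * a n r)) • eSeq n) = res F fun n => T x n * a n r := by
    ext m
    simp [res, eSeq, Finset.sum_apply]
  have e' : (fun n => (1 : ℝ) * (T x n * a n r)) = fun n => T x n * a n r := by simp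
  rw [e, e'] at h1
  set z : ℕ → ℝ := fun n => T x n * a n r with hz
  have hzm : l.mem z := hmem x r
  have hd : l.mem (res F z - z) := by
    rw [sub_eq_add_neg, ← neg_one_smul ℝ z]
    exact l.mem_add (mem_res l F z) (l.mem_smul _ hzm)
  have h2 := l.nrm_add_le (mem_res l F z) (l.mem_smul (-1) hd)
  rw [l.nrm_smul _ hd] at h2
  have e2 : res F z + (-1 : ℝ) • (res F z - z) = z := by
    ext n; simp
  rw [e2] at h2
  have h3 := h F x
  simp only [abs_neg, abs_one, one_mul] at h2
  linarith

lemma sufficiency (hp : ∀ k x, p k x ≤ p (k + 1) x) (ha : IsKotheMatrix a) (H : DualIneq p a)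
    (hmem : ∀ x, memLamL l a (T x))
    (hcont : ∀ k, ∃ m, opSeminorm (fun _ : E => True) (fun x => p m x) (lamLNorm l a k) T < ⊤) :
    ∃ N, ∀ r, opSeminorm (fun _ : E => True) (fun x => p N x) (lamLNorm l a r) T < ⊤ := by
  choose NT hNT using hcont
  simp only [opSeminorm_lt_top_iff hmem] at hNT ⊢
  choose Ck hCk0 hCk using hNT
  obtain ⟨i, κL, h⟩ := finite_bound hp ha H (⟨hmem, hCk0, hCk⟩ : Cont p a l T NT Ck)
  refine ⟨i, fun r => ?_⟩
  obtain ⟨C, hC, hF⟩ := h (max κL r) (le_max_left _ _)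
  refine ⟨C, hC, fun x => le_trans (l.mono (hmem x r) (hmem x (max κL r)) fun n => ?_)
    (nrm_le_of_bd hmem hF)⟩
  rw [abs_mul, abs_mul, abs_of_pos (apos ha n _), abs_of_pos (apos ha n _)]
  exact mul_le_mul_of_nonneg_left (amono ha n (le_max_right _ _)) (abs_nonneg _)

end Sufficiency

/-! ### Boundedness implies the dual inequality -/

section Necessity
variable {E : Type*} [AddCommGroup E] [Module ℝ E]
variable {p : ℕ → Seminorm ℝ E} {a : ℕ → ℕ → ℝ} {l : MonoBanachSeqSpace}

lemma nrm_sum_le (l : MonoBanachSeqSpace) (t : ℕ → ℝ) (v : ℕ → ℕ) (s : Finset ℕ) :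
    l.mem (∑ m ∈ s, t m • eSeq (v m)) ∧ l.nrm (∑ m ∈ s, t m • eSeq (v m)) ≤ ∑ m ∈ s, |t m| := by
  classical
  induction s using Finset.induction_on with
  | empty => simp [l.mem_zero, (l.nrm_eq_zero_iff l.mem_zero).2 rfl]
  | insert m s hm ih =>
    rw [Finset.sum_insert hm, Finset.sum_insert hm]
    have h := l.mem_smul (t m) (l.mem_e (v m))
    refine ⟨l.mem_add h ih.1, (l.nrm_add_le h ih.1).trans (add_le_add ?_ ih.2)⟩
    rw [l.nrm_smul _ (l.mem_e _), l.nrm_e, mul_one]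

/-- An absolutely convergent combination of unit sequences belongs to `ℓ`. -/
lemma mem_of_summable (l : MonoBanachSeqSpace) {t : ℕ → ℝ} (ht : Summable fun m => |t m|)
    (v : ℕ → ℕ) :
    l.mem (fun n => ∑' m, if v m = n then t m else 0) ∧
      l.nrm (fun n => ∑' m, if v m = n then t m else 0) ≤ ∑' m, |t m| := by
  let U : ℕ → ℕ → ℝ := fun M => ∑ m ∈ Finset.range M, t m • eSeq (v m)
  have hneg : ∀ {z : ℕ → ℝ}, l.mem z → l.mem (-z) ∧ l.nrm (-z) = l.nrm z := fun hz => by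
    rw [← neg_one_smul ℝ]
    exact ⟨l.mem_smul _ hz, by rw [l.nrm_smul _ hz]; simp⟩
  have hsub : ∀ {z z' : ℕ → ℝ}, l.mem z → l.mem z' → l.mem (z - z') := fun hz hz' => by
    rw [sub_eq_add_neg]; exact l.mem_add hz (hneg hz').1
  have hUm : ∀ M, l.mem (U M) := fun M => (nrm_sum_le l t v _).1
  have hUs : ∀ p q, q ≤ p → l.nrm (U p - U q) ≤
      dist (∑ m ∈ Finset.range p, |t m|) (∑ m ∈ Finset.range q, |t m|) := fun p q h => by
    rw [Real.dist_eq, ← Finset.sum_Ico_eq_sub _ h, ← Finset.sum_Ico_eq_sub _ h]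
    exact (nrm_sum_le l t v _).2.trans (le_abs_self _)
  obtain ⟨x, hx, hlim⟩ := l.complete U hUm fun ε hε => by
    obtain ⟨M, hM⟩ := Metric.cauchySeq_iff.1 ht.hasSum.tendsto_sum_nat.cauchySeq ε hε
    refine ⟨M, fun p q hp hq => ?_⟩
    rcases le_total q p with h | h
    · exact (hUs p q h).trans_lt (hM p hp q hq)
    · rw [← neg_sub, (hneg (hsub (hUm q) (hUm p))).2]
      exact (hUs q p h).trans_lt (hM q hq p hp)
  have hxe : x = fun n => ∑' m, if v m = n then t m else 0 := by
    ext n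
    have hs : Summable fun m => if v m = n then t m else 0 :=
      Summable.of_norm_bounded ht fun m => by
        split_ifs <;> simp
    refine tendsto_nhds_unique (f := fun M => U M n) (l := Filter.atTop) ?_ ?_
    · rw [Metric.tendsto_atTop]
      intro ε hε
      obtain ⟨M, hM⟩ := hlim ε hε
      refine ⟨M, fun q hq => lt_of_le_of_lt ?_ (hM q hq)⟩
      exact abs_coord_le l (hsub (hUm q) hx) n
    · refine hs.hasSum.tendsto_sum_nat.congr fun M => ?_
      simp only [U, Finset.sum_apply, Pi.smul_apply, smul_eq_mul, eSeq]
      refine Finset.sum_congr rfl fun m _ => ?_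
      by_cases h : v m = n
      · simp [h]
      · simp [h, Ne.symm h]
  rw [← hxe]
  refine ⟨hx, le_of_forall_pos_le_add fun ε hε => ?_⟩
  obtain ⟨M, hM⟩ := hlim ε hε
  have h1 := hM M le_rfl
  have hd := hsub (hUm M) hx
  have h2 := l.nrm_add_le (hUm M) (hneg hd).1
  rw [(hneg hd).2, neg_sub, add_sub_cancel] at h2
  have h3 := (nrm_sum_le l t v (Finset.range M)).2
  have h4 := ht.sum_le_tsum (Finset.range M) fun _ _ => abs_nonneg _
  simp only [U] at h1 h2
  linarith

/-- The `n`-th coordinate of the `m`-th term of the subseries of `∑ 2⁻ᵐ e_{v m}` selected by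
`θ`. -/
noncomputable def coef (v : ℕ → ℕ) (θ : ℕ → Bool) (n m : ℕ) : ℝ :=
  if v m = n then (if θ m = true then 2⁻¹ ^ m else 0) else 0

variable {u : ℕ → E →ₗ[ℝ] ℝ} {v : ℕ → ℕ}

lemma coef_bound (ha : IsKotheMatrix a)
    (hU : ∀ k, ∃ (M : ℕ) (A : ℝ), 0 ≤ A ∧ ∀ m x, a (v m) k * |u m x| ≤ A * p M x)
    (x : E) (n : ℕ) :
    ∃ B : ℝ, ∀ θ m, ‖coef v θ n m * u m x‖ ≤ 2⁻¹ ^ m * B := by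
  obtain ⟨M, A, hA, h⟩ := hU 0
  have hn := apos ha n 0
  refine ⟨A * p M x / a n 0, fun θ m => ?_⟩
  have hB : 0 ≤ A * p M x / a n 0 := by positivity
  unfold coef
  by_cases hv : v m = n
  · by_cases hθ : θ m = true
    · rw [if_pos hv, if_pos hθ, norm_mul, Real.norm_of_nonneg (by positivity)]
      gcongr
      rw [le_div_iff₀ hn, Real.norm_eq_abs, mul_comm, ← hv]
      exact h m x
    · simp only [if_pos hv, if_neg hθ, zero_mul, norm_zero]; positivity
  · simp only [if_neg hv, zero_mul, norm_zero]; positivity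

lemma summable_half (B : ℝ) : Summable fun m : ℕ => (2⁻¹ : ℝ) ^ m * B :=
  (summable_geometric_of_lt_one (by norm_num) (by norm_num)).mul_right B

lemma tsum_half (B : ℝ) : ∑' m : ℕ, (2⁻¹ : ℝ) ^ m * B = 2 * B := by
  rw [tsum_mul_right, tsum_geometric_of_lt_one (by norm_num) (by norm_num)]; norm_num

/-- If all continuous operators are bounded, the rank-one operators `u_m ⊗ e_{v m}` of an
equicontinuous sequence satisfy a common estimate up to factors `2 ^ m`, for all large `m`. This is
Baire's theorem in the Cantor space of all subseries of `∑ 2⁻ᵐ u_m ⊗ e_{v m}`. -/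
lemma baire_bound (ha : IsKotheMatrix a)
    (hB : ∀ T : E →ₗ[ℝ] (ℕ → ℝ),
        (∀ x, memLamL l a (T x)) →
        (∀ k, ∃ m, opSeminorm (fun _ : E => True) (fun x => p m x) (lamLNorm l a k) T < ⊤) →
        ∃ N, ∀ r, opSeminorm (fun _ : E => True) (fun x => p N x) (lamLNorm l a r) T < ⊤)
    (hU : ∀ k, ∃ (M : ℕ) (A : ℝ), 0 ≤ A ∧ ∀ m x, a (v m) k * |u m x| ≤ A * p M x)
    (r : ℕ → ℕ) :
    ∃ (i : ℕ) (D : ℝ), 0 ≤ D ∧ ∀ᶠ m in Filter.atTop, ∀ x,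
      a (v m) (r i) * |u m x| ≤ D * 2 ^ m * p i x := by
  have hsum : ∀ θ x n, Summable fun m => coef v θ n m * u m x := fun θ x n => by
    obtain ⟨B, hB⟩ := coef_bound ha hU x n
    exact Summable.of_norm_bounded (summable_half B) (hB θ)
  let op : (ℕ → Bool) → E →ₗ[ℝ] (ℕ → ℝ) := fun θ =>
    { toFun := fun x n => ∑' m, coef v θ n m * u m x
      map_add' := fun x y => by
        ext n
        simp only [map_add, mul_add, Pi.add_apply]
        exact (hsum θ x n).tsum_add (hsum θ y n)
      map_smul' := fun c x => by
        ext n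
        simp only [map_smul, smul_eq_mul, RingHom.id_apply, Pi.smul_apply]
        rw [← tsum_mul_left]
        exact tsum_congr fun m => by ring }
  have hop : ∀ θ x n, op θ x n = ∑' m, coef v θ n m * u m x := fun _ _ _ => rfl
  have hnorm : ∀ k, ∃ (M : ℕ) (A : ℝ), 0 ≤ A ∧ ∀ θ x,
      l.mem (fun n => op θ x n * a n k) ∧ l.nrm (fun n => op θ x n * a n k) ≤ A * p M x := by
    intro k
    obtain ⟨M, A, hA, h⟩ := hU k
    refine ⟨M, 2 * A, by positivity, fun θ x => ?_⟩
    let t : ℕ → ℝ := fun m => (if θ m = true then 2⁻¹ ^ m else 0) * u m x * a (v m) k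
    have htb : ∀ m, |t m| ≤ 2⁻¹ ^ m * (A * p M x) := fun m => by
      have hm := h m x
      have ham := apos ha (v m) k
      simp only [t]
      by_cases hθ : θ m = true
      · rw [if_pos hθ, abs_mul, abs_mul, abs_of_pos ham,
          abs_of_nonneg (by positivity : (0 : ℝ) ≤ 2⁻¹ ^ m), mul_assoc, mul_comm |u m x|]
        gcongr
      · rw [if_neg hθ, zero_mul, zero_mul, abs_zero]
        positivity
    have hts : Summable fun m => |t m| :=
      Summable.of_nonneg_of_le (fun _ => abs_nonneg _) htb (summable_half _)
    have e : (fun n => op θ x n * a n k) = fun n => ∑' m, if v m = n then t m else 0 := by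
      ext n
      rw [hop, ← tsum_mul_right]
      refine tsum_congr fun m => ?_
      by_cases hv : v m = n
      · simp [coef, t, hv]
      · simp [coef, hv]
    obtain ⟨h1, h2⟩ := mem_of_summable l hts v
    rw [e]
    refine ⟨h1, h2.trans ((hts.tsum_le_tsum htb (summable_half _)).trans ?_)⟩
    rw [tsum_half, mul_assoc]
  have hmem : ∀ θ x, memLamL l a (op θ x) := fun θ x k => by
    obtain ⟨M, A, -, h⟩ := hnorm k; exact (h θ x).1
  let C : ℕ × ℕ → Set (ℕ → Bool) := fun q =>
    {θ | ∀ x n, |op θ x n| * a n (r q.1) ≤ (q.2 : ℝ) * p q.1 x}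
  have hclosed : ∀ q, IsClosed (C q) := by
    intro q
    simp only [C, Set.ofPred_forall]
    refine isClosed_iInter fun x => isClosed_iInter fun n => ?_
    refine isClosed_le ?_ continuous_const
    refine (Continuous.abs ?_).mul continuous_const
    obtain ⟨B, hB⟩ := coef_bound ha hU x n
    simp only [hop]
    refine continuous_tsum (fun m => ?_) (summable_half B) (fun m θ => hB θ m)
    exact (continuous_of_discreteTopology
      (f := fun b : Bool =>
        (if v m = n then (if b = true then (2⁻¹ : ℝ) ^ m else 0) else 0) * u m x)).comp
      (continuous_apply m)
  have hcover : ⋃ q, C q = Set.univ := by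
    refine Set.eq_univ_of_forall fun θ => ?_
    obtain ⟨i, hi⟩ := hB (op θ) (hmem θ) fun k => by
      obtain ⟨M, A, hA, h⟩ := hnorm k
      exact ⟨M, (opSeminorm_lt_top_iff (hmem θ) k M).2 ⟨A, hA, fun x => (h θ x).2⟩⟩
    obtain ⟨A, hA, h⟩ := (opSeminorm_lt_top_iff (hmem θ) (r i) i).1 (hi (r i))
    obtain ⟨j, hj⟩ := exists_nat_ge A
    refine Set.mem_iUnion.2 ⟨(i, j), fun x n => ?_⟩
    have h1 := abs_coord_le l (hmem θ x (r i)) n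
    rw [abs_mul, abs_of_pos (apos ha n _)] at h1
    exact h1.trans ((h x).trans (mul_le_mul_of_nonneg_right hj (apply_nonneg _ _)))
  obtain ⟨⟨i, j⟩, θ, hθ⟩ := nonempty_interior_of_iUnion_of_closed hclosed hcover
  have htend : ∀ b : Bool,
      Filter.Tendsto (fun m => Function.update θ m b) Filter.atTop (nhds θ) := fun b => by
    rw [tendsto_pi_nhds]
    intro k
    refine tendsto_const_nhds.congr' ?_
    filter_upwards [Filter.eventually_gt_atTop k] with m hm
    rw [Function.update_of_ne hm.ne]
  have hev : ∀ b : Bool, ∀ᶠ m in Filter.atTop, Function.update θ m b ∈ C (i, j) := fun b =>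
    ((htend b).eventually (isOpen_interior.mem_nhds hθ)).mono fun m hm => interior_subset hm
  refine ⟨i, 2 * j, by positivity, ?_⟩
  filter_upwards [hev true, hev false] with m h1 h2 x
  have g1 := h1 x (v m)
  have g2 := h2 x (v m)
  have hdiff : op (Function.update θ m true) x (v m) - op (Function.update θ m false) x (v m) =
      2⁻¹ ^ m * u m x := by
    rw [hop, hop, ← (hsum _ x _).tsum_sub (hsum _ x _), tsum_eq_single m]
    · simp [coef]
    · intro m' hm'
      simp [coef, Function.update_of_ne hm']
  have ham := apos ha (v m) (r i)
  have h3 : |(2⁻¹ : ℝ) ^ m * u m x| * a (v m) (r i) ≤ 2 * j * p i x := by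
    rw [← hdiff]
    refine le_trans (mul_le_mul_of_nonneg_right (abs_sub _ _) ham.le) ?_
    rw [add_mul]
    simp only at g1 g2
    linarith
  rw [abs_mul, abs_of_nonneg (by positivity : (0 : ℝ) ≤ 2⁻¹ ^ m), inv_pow, mul_assoc,
    inv_mul_le_iff₀ (by positivity)] at h3
  linarith

/-- A normalised witness for the failure of the dual inequality. -/
lemma exists_witness (ha : IsKotheMatrix a) {N : ℕ → ℕ} {i r k₀ v : ℕ} {C : ℝ} {u : E →ₗ[ℝ] ℝ}
    (hC : 0 < C)
    (h : ENNReal.ofReal C *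
          (Finset.Icc 1 k₀).sup (fun k => ENNReal.ofReal (a v k) * dualNorm p (N k) u) <
        ENNReal.ofReal (a v r) * dualNorm p i u) :
    ∃ u' : E →ₗ[ℝ] ℝ, (∀ k, 1 ≤ k → k ≤ k₀ → ∀ x, a v k * |u' x| ≤ p (N k) x) ∧
      ∀ D : ℝ, 0 ≤ D → (∀ x, a v r * |u' x| ≤ D * p i x) → C < D := by
  have hC0 : ENNReal.ofReal C ≠ 0 := by simpa using hC
  rw [mul_comm, ← ENNReal.lt_div_iff_mul_lt (Or.inl hC0) (Or.inl ENNReal.ofReal_ne_top)] at h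
  obtain ⟨c, hc1, hc2⟩ := exists_between h
  have hctop : c ≠ ⊤ := (lt_of_lt_of_le hc2 le_top).ne
  have hcpos : 0 < c.toReal := ENNReal.toReal_pos (lt_of_le_of_lt zero_le hc1).ne' hctop
  rw [ENNReal.lt_div_iff_mul_lt (Or.inl hC0) (Or.inl ENNReal.ofReal_ne_top)] at hc2
  rw [← ENNReal.ofReal_toReal hctop] at hc1 hc2
  set d := c.toReal
  refine ⟨d⁻¹ • u, fun k h1 h2 x => ?_, fun D hD hx => ?_⟩
  · have hk := apos ha v k
    have hle : ENNReal.ofReal (a v k) * dualNorm p (N k) u ≤ ENNReal.ofReal d :=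
      (Finset.le_sup (f := fun k => ENNReal.ofReal (a v k) * dualNorm p (N k) u)
        (Finset.mem_Icc.2 ⟨h1, h2⟩)).trans hc1.le
    have hle2 : dualNorm p (N k) u ≤ ENNReal.ofReal (d / a v k) := by
      rw [ENNReal.ofReal_div_of_pos hk,
        ENNReal.le_div_iff_mul_le (Or.inl (by simpa using hk)) (Or.inl ENNReal.ofReal_ne_top),
        mul_comm]
      exact hle
    have h3 := le_of_dualNorm_le p (N k) u (by positivity) hle2 x
    rw [LinearMap.smul_apply, smul_eq_mul, abs_mul, abs_of_pos (inv_pos.2 hcpos)]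
    calc a v k * (d⁻¹ * |u x|) ≤ a v k * (d⁻¹ * (d / a v k * p (N k) x)) := by gcongr
      _ = p (N k) x := by field_simp
  · have hr := apos ha v r
    have h3 : dualNorm p i u ≤ ENNReal.ofReal (d * D / a v r) := by
      refine dualNorm_le p i u (by positivity) fun x => ?_
      have h4 := hx x
      rw [LinearMap.smul_apply, smul_eq_mul, abs_mul, abs_of_pos (inv_pos.2 hcpos)] at h4
      calc |u x| = d / a v r * (a v r * (d⁻¹ * |u x|)) := by field_simp
        _ ≤ d / a v r * (D * p i x) := by gcongr
        _ = _ := by ring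
    have h5 : ENNReal.ofReal (d * C) < ENNReal.ofReal (d * D) := by
      calc ENNReal.ofReal (d * C) = ENNReal.ofReal d * ENNReal.ofReal C :=
            ENNReal.ofReal_mul hcpos.le
        _ < ENNReal.ofReal (a v r) * dualNorm p i u := hc2
        _ ≤ ENNReal.ofReal (a v r) * ENNReal.ofReal (d * D / a v r) := by gcongr
        _ = ENNReal.ofReal (d * D) := by
          rw [← ENNReal.ofReal_mul hr.le]; congr 1; field_simp
    exact lt_of_mul_lt_mul_left ((ENNReal.ofReal_lt_ofReal_iff_of_nonneg (by positivity)).1 h5)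
      hcpos.le

/-- Finitely many exceptions do not destroy equicontinuity at any level. -/
lemma equicont (hp : ∀ k x, p k x ≤ p (k + 1) x) (ha : IsKotheMatrix a) {N : ℕ → ℕ}
    (h : ∀ m k, 1 ≤ k → k ≤ m + 1 → ∀ x, a (v m) k * |u m x| ≤ p (N k) x) (k : ℕ) :
    ∃ (M : ℕ) (A : ℝ), 0 ≤ A ∧ ∀ m x, a (v m) k * |u m x| ≤ A * p M x := by
  set q := max k 1 with hq
  have hq1 : 1 ≤ q := le_max_right _ _
  have hpos : ∀ m, 0 ≤ a (v m) q / a (v m) 1 := fun m => (div_pos (apos ha _ _) (apos ha _ _)).le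
  have hs := Finset.sum_nonneg fun m (_ : m ∈ Finset.range q) => hpos m
  refine ⟨max (N q) (N 1), 1 + ∑ m ∈ Finset.range q, a (v m) q / a (v m) 1, by positivity,
    fun m x => ?_⟩
  have h0 : a (v m) k * |u m x| ≤ a (v m) q * |u m x| :=
    mul_le_mul_of_nonneg_right (amono ha _ (le_max_left _ _)) (abs_nonneg _)
  refine h0.trans ?_
  by_cases hm : q ≤ m + 1
  · calc _ ≤ _ := h m q hq1 hm x
      _ ≤ p (max (N q) (N 1)) x := monop p hp (le_max_left _ _) x
      _ ≤ _ := le_mul_of_one_le_left (apply_nonneg _ _) (by linarith)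
  · have h1 := apos ha (v m) 1
    have hle := Finset.single_le_sum (f := fun m => a (v m) q / a (v m) 1) (fun m _ => hpos m)
      (Finset.mem_range.2 (by omega : m < q))
    calc a (v m) q * |u m x| = a (v m) q / a (v m) 1 * (a (v m) 1 * |u m x|) := by field_simp
      _ ≤ a (v m) q / a (v m) 1 * p (max (N q) (N 1)) x :=
        mul_le_mul_of_nonneg_left
          ((h m 1 le_rfl (by omega) x).trans (monop p hp (le_max_right _ _) x)) (hpos m)
      _ ≤ _ := mul_le_mul_of_nonneg_right (by linarith) (apply_nonneg _ _)

lemma necessity (hp : ∀ k x, p k x ≤ p (k + 1) x) (ha : IsKotheMatrix a)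
    (hB : ∀ T : E →ₗ[ℝ] (ℕ → ℝ),
        (∀ x, memLamL l a (T x)) →
        (∀ k, ∃ m, opSeminorm (fun _ : E => True) (fun x => p m x) (lamLNorm l a k) T < ⊤) →
        ∃ N, ∀ r, opSeminorm (fun _ : E => True) (fun x => p N x) (lamLNorm l a r) T < ⊤) :
    DualIneq p a := by
  by_contra hcon
  unfold DualIneq at hcon
  push Not at hcon
  obtain ⟨N, hN⟩ := hcon
  choose r hr using hN
  have hwit : ∀ m : ℕ, ∃ (v : ℕ) (u : E →ₗ[ℝ] ℝ),
      (∀ k, 1 ≤ k → k ≤ m + 1 → ∀ x, a v k * |u x| ≤ p (N k) x) ∧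
      ∀ D : ℝ, 0 ≤ D → (∀ x, a v (r m.unpair.1) * |u x| ≤ D * p m.unpair.1 x) →
        (4 : ℝ) ^ m < D := fun m => by
    obtain ⟨v, u, -, h⟩ := hr m.unpair.1 (m + 1) (by omega) (4 ^ m) (by positivity)
    obtain ⟨u', hu'⟩ := exists_witness ha (by positivity) h
    exact ⟨v, u', hu'⟩
  choose v u h1 h2 using hwit
  obtain ⟨i, D, hD, hev⟩ := baire_bound ha hB (equicont hp ha h1) r
  obtain ⟨m₀, hm₀⟩ := Filter.eventually_atTop.1 hev
  obtain ⟨j, hj⟩ := pow_unbounded_of_one_lt D (one_lt_two (α := ℝ))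
  -- An index `m` attached to `i` that is beyond `m₀` and `j`.
  set m := Nat.pair i (max m₀ j) with hm
  have hle : max m₀ j ≤ m := Nat.right_le_pair _ _
  have hmi : m.unpair.1 = i := by rw [hm, Nat.unpair_pair]
  have h3 := h2 m (D * 2 ^ m) (by positivity)
  rw [hmi] at h3
  have h4 := h3 (hm₀ m ((le_max_left _ _).trans hle))
  have h5 : D ≤ 2 ^ m := hj.le.trans (pow_le_pow_right₀ one_le_two ((le_max_right _ _).trans hle))
  have h6 : D * 2 ^ m ≤ 2 ^ m * 2 ^ m := by gcongr
  rw [← mul_pow] at h6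
  norm_num at h6
  linarith

end Necessity

end KotheB

/-- Theorem 2. For a Fréchet space `E` with increasing generating seminorms
`(p k)` and an `ℓ`-Köthe space `λ^ℓ(A)`: `(E, λ^ℓ(A)) ∈ 𝓑` iff for every sequence `N(k)` there
is `N₀` such that for each `r` there are `k₀` and `C > 0` with
`a_v^r ‖u‖*_{N₀} ≤ C · max_{1 ≤ k ≤ k₀} a_v^k ‖u‖*_{N(k)}` for all `v` and all `u ∈ E′`. -/
theorem B_pair_frechet_lambdaL_iff
    {E : Type*} [AddCommGroup E] [Module ℝ E]
    (p : ℕ → Seminorm ℝ E)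
    (hpmono : ∀ k x, p k x ≤ p (k + 1) x)
    (hHaus : ∀ x : E, (∀ k, p k x = 0) → x = 0)
    (hComplete : ∀ u : ℕ → E,
      (∀ k, ∀ ε : ℝ, 0 < ε → ∃ M, ∀ i j, M ≤ i → M ≤ j → p k (u i - u j) < ε) →
      ∃ x : E, ∀ k, ∀ ε : ℝ, 0 < ε → ∃ M, ∀ i, M ≤ i → p k (u i - x) < ε)
    (a : ℕ → ℕ → ℝ) (ha : IsKotheMatrix a) (l : MonoBanachSeqSpace) :
    (∀ T : E →ₗ[ℝ] (ℕ → ℝ),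
        (∀ x, memLamL l a (T x)) →
        (∀ k, ∃ m, opSeminorm (fun _ : E => True) (fun x => p m x) (lamLNorm l a k) T < ⊤) →
        ∃ N, ∀ r, opSeminorm (fun _ : E => True) (fun x => p N x) (lamLNorm l a r) T < ⊤) ↔
      (∀ N : ℕ → ℕ, ∃ N₀ : ℕ, ∀ r : ℕ, ∃ k₀ : ℕ, 1 ≤ k₀ ∧ ∃ C : ℝ, 0 < C ∧
        ∀ (v : ℕ) (u : E →ₗ[ℝ] ℝ), (∃ k, ∃ C' : ℝ, ∀ x, |u x| ≤ C' * p k x) →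
          ENNReal.ofReal (a v r) * dualNorm p N₀ u ≤
            ENNReal.ofReal C *
              (Finset.Icc 1 k₀).sup
                (fun k => ENNReal.ofReal (a v k) * dualNorm p (N k) u)) := by
  exact ⟨fun hB => KotheB.necessity hpmono ha hB,
    fun H T hmem hcont => KotheB.sufficiency hpmono ha H hmem hcont⟩
end
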